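/- Every 6-vector of the rank-10 𝒪-lattice Λ = Λ′ ⊥ Λ″ ⊥ H_𝒪 is perpendicular to some primitive isotropic vector of Λ, and the group U(Λ) acts transitively on the set of 6-vectors of Λ. The U(Λ)-action on the set of pairs (z, n), where z is a 6-vector, n is a primitive isotropic vector and ψ(z, n) = 0, has exactly two orbits: every such pair is U(Λ)-equivalent to exactly one of (r₁′ + r₂′, e) (type (θ)) and (r₁′ + r₁″, e) (type (0)). -/

import Mathlib

open Polynomial

noncomputable section

/-- The Eisenstein ring `𝒪 = ℤ[ω]`, where `ω = e^{2πi/6}` is a primitive sixth root of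
unity (so `ω² - ω + 1 = 0`), presented as `ℤ[X]/(X² - X + 1)`. -/
abbrev O : Type := AdjoinRoot (X ^ 2 - X + 1 : ℤ[X])

/-- `ω`, the distinguished primitive sixth root of unity in `𝒪`. -/
def ω : O := AdjoinRoot.root _

lemma ω_sq : ω ^ 2 - ω + 1 = 0 := by
  have h := AdjoinRoot.eval₂_root (X ^ 2 - X + 1 : ℤ[X])
  simpa [ω, eval₂_add, eval₂_sub, eval₂_pow, eval₂_X, eval₂_one] using h

/-- Complex conjugation on the Eisenstein ring: the ring involution with
`conj ω = 1 - ω = ω⁻¹`. -/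
def conj : O →+* O :=
  AdjoinRoot.lift (algebraMap ℤ O) (1 - ω) (by
    have h := ω_sq
    simp only [eval₂_add, eval₂_sub, eval₂_pow, eval₂_X, eval₂_one]
    ring_nf
    ring_nf at h
    linear_combination h)

/-- `θ := ω - ω⁻¹ = ω - conj ω = 2ω - 1`, a square root of `-3` in `𝒪`. -/
def θ : O := ω - conj ω

/-- The rank-10 𝒪-lattice `Λ = Λ′ ⊥ Λ″ ⊥ H_𝒪`, modelled on `Fin 10 → 𝒪`.  The basis is
`(r₁′, …, r₄′, r₁″, …, r₄″, e, f)` (coordinates `0–3`, `4–7`, `8`, `9`).  This is the Gram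
matrix: on each copy of `Λ⁴` (coordinates `0–3` and `4–7`) we have `ψ(rᵢ,rᵢ) = 3`,
`ψ(rᵢ,rᵢ₊₁) = θ`, `ψ(rᵢ,rⱼ) = 0` for `j > i+1`; the two copies and `H_𝒪` are mutually
orthogonal; and on `H_𝒪` we have `ψ(e,e) = ψ(f,f) = 0`, `ψ(e,f) = θ`, `ψ(f,e) = −θ`. -/
def gram10 : Fin 10 → Fin 10 → O := fun i j =>
  if (i : ℕ) < 8 ∧ (j : ℕ) < 8 then
    (if (i : ℕ) / 4 = (j : ℕ) / 4 then
      (if i = j then 3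
       else if (i : ℕ) + 1 = (j : ℕ) then θ
       else if (j : ℕ) + 1 = (i : ℕ) then conj θ
       else 0)
     else 0)
  else if (i : ℕ) = 8 ∧ (j : ℕ) = 9 then θ
  else if (i : ℕ) = 9 ∧ (j : ℕ) = 8 then -θ
  else 0

/-- The Hermitian form of `Λ`: 𝒪-linear in the first variable, conjugate-linear in the
second; it has hyperbolic signature `(9,1)`. -/
def psi10 (x y : Fin 10 → O) : O :=
  ∑ i : Fin 10, ∑ j : Fin 10, x i * conj (y j) * gram10 i j

/-- `g` belongs to the unitary group `U(Λ)`. -/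
def IsUnitary10 (g : (Fin 10 → O) ≃ₗ[O] (Fin 10 → O)) : Prop :=
  ∀ x y, psi10 (g x) (g y) = psi10 x y

/-- The `i`-th basis vector of `Λ` (so `b 0, …, b 3` are `r₁′, …, r₄′`;
`b 4, …, b 7` are `r₁″, …, r₄″`; `b 8 = e` and `b 9 = f`). -/
def b (i : Fin 10) : Fin 10 → O := Pi.single i 1

/-- `x ∈ Λ` is primitive: `x ∉ λΛ` for every non-unit `λ ∈ 𝒪`. -/
def IsPrimVec (x : Fin 10 → O) : Prop :=
  ∀ a : O, (∃ y : Fin 10 → O, x = a • y) → IsUnit a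

/-!
Division by `θ` turns the Hermitian form into a skew-Hermitian one, and `Tr ψ / 3` turns `Λ⁴` into
the root lattice `E₈`; the 6-vectors of `Λ` become the vectors of norm 4 of an even integral
lattice.

For a vector `(x, a, d)` of `Λ = (Λ′ ⊥ Λ″) ⊥ H_𝒪` of norm 0 or 4, Eichler transvections reduce both
components of `x` modulo `d`. As the covering radius of `E₈` is 1, the norm then forces
`|a| < |d|`, and exchanging `a` and `d` continues the descent until `d` is zero or a unit. It can
stall only for isotropic vectors whose two components are deep holes. For primitive vectors this
means that `d` is twice a unit, and a triflection in a suitable root restores the descent.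

So all 6-vectors are equivalent, and every primitive isotropic vector is equivalent to `e`. A
6-vector orthogonal to `e` is determined up to the stabilizer of `e` by its image in
`e^⊥ / e = E₈ ⊥ E₈`, and the norms of the two components of this image are `4 + 0` or `2 + 2`.
The Weyl group being transitive on the vectors of norm 2 and of norm 4, this leaves two orbits. They
are different because two roots that are not orthogonal lie in the same summand.
-/

namespace O

/-- The isomorphism of `𝒪` with the quadratic algebra `ℤ[ω]/(ω² = -1 + ω)` of Mathlib, which
supplies coordinates and the norm. -/
def toQuadratic : O ≃ₐ[ℤ] QuadraticAlgebra ℤ (-1) 1 :=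
  AlgEquiv.ofAlgHom
    (AdjoinRoot.liftAlgHom _ (Algebra.ofId ℤ _) QuadraticAlgebra.omega (by
      simp only [eval₂_add, eval₂_sub, eval₂_X, eval₂_one, sq]
      ext <;> simp [QuadraticAlgebra.re_one, QuadraticAlgebra.im_one]))
    (QuadraticAlgebra.lift ⟨ω, by linear_combination (norm := skip) ω_sq; simp; ring⟩)
    (by ext <;> simp [ω])
    (by ext; simp [ω])

/-- The coefficient `m` of `x = m + n ω`. -/
def re (x : O) : ℤ := (toQuadratic x).re

/-- The coefficient `n` of `x = m + n ω`. -/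
def im (x : O) : ℤ := (toQuadratic x).im

/-- The norm `x ↦ x · conj x` of `𝒪` over `ℤ`. -/
def normSq : O →* ℤ := QuadraticAlgebra.norm.comp (toQuadratic : O →* QuadraticAlgebra ℤ (-1) 1)

@[ext]
lemma ext {x y : O} (hre : x.re = y.re) (him : x.im = y.im) : x = y :=
  toQuadratic.injective (QuadraticAlgebra.ext hre him)

@[simp] lemma toQuadratic_ω : toQuadratic ω = QuadraticAlgebra.omega := by
  simp [toQuadratic, ω]

@[simp] lemma re_add (x y : O) : (x + y).re = x.re + y.re := by simp [re]
@[simp] lemma im_add (x y : O) : (x + y).im = x.im + y.im := by simp [im]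
@[simp] lemma re_sub (x y : O) : (x - y).re = x.re - y.re := by simp [re]
@[simp] lemma im_sub (x y : O) : (x - y).im = x.im - y.im := by simp [im]
@[simp] lemma re_neg (x : O) : (-x).re = -x.re := by simp [re]
@[simp] lemma im_neg (x : O) : (-x).im = -x.im := by simp [im]
@[simp] lemma re_mul (x y : O) : (x * y).re = x.re * y.re - x.im * y.im := by
  simp [re, im, sub_eq_add_neg]
@[simp] lemma im_mul (x y : O) : (x * y).im = x.re * y.im + x.im * y.re + x.im * y.im := by
  simp [re, im]
@[simp] lemma re_zero : re 0 = 0 := by simp [re]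
@[simp] lemma im_zero : im 0 = 0 := by simp [im]
@[simp] lemma re_one : re 1 = 1 := by simp [re, QuadraticAlgebra.re_one]
@[simp] lemma im_one : im 1 = 0 := by simp [im, QuadraticAlgebra.im_one]
@[simp] lemma re_intCast (n : ℤ) : re n = n := by simp [re]
@[simp] lemma im_intCast (n : ℤ) : im n = 0 := by simp [im]
@[simp] lemma re_ofNat (n : ℕ) [n.AtLeastTwo] : re (ofNat(n) : O) = ofNat(n) :=
  mod_cast re_intCast n
@[simp] lemma im_ofNat (n : ℕ) [n.AtLeastTwo] : im (ofNat(n) : O) = 0 :=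
  mod_cast im_intCast n
@[simp] lemma re_ω : ω.re = 0 := by simp [re]
@[simp] lemma im_ω : ω.im = 1 := by simp [im]

lemma eq_re_add_im_mul_ω (x : O) : x = x.re + x.im * ω := by ext <;> simp

lemma conj_ω : conj ω = 1 - ω := AdjoinRoot.lift_root _

@[simp] lemma re_conj (x : O) : (conj x).re = x.re + x.im := by
  conv_lhs => rw [eq_re_add_im_mul_ω x]
  simp [conj_ω]

@[simp] lemma im_conj (x : O) : (conj x).im = -x.im := by
  conv_lhs => rw [eq_re_add_im_mul_ω x]
  simp [conj_ω]

@[simp] lemma re_θ : θ.re = -1 := by simp [θ]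
@[simp] lemma im_θ : θ.im = 2 := by simp [θ]

@[simp] lemma conj_conj (x : O) : conj (conj x) = x := by ext <;> simp
lemma conj_θ : conj θ = -θ := by ext <;> simp
lemma θ_mul_θ : θ * θ = -3 := by ext <;> simp

lemma normSq_def (x : O) : normSq x = x.re * x.re + x.re * x.im + x.im * x.im := by
  simp [normSq, QuadraticAlgebra.norm_def, re, im]

lemma mul_conj (x : O) : x * conj x = normSq x := by
  ext <;> simp [normSq_def] <;> ring

@[simp] lemma normSq_neg (x : O) : normSq (-x) = normSq x := by simp [normSq_def]
@[simp] lemma normSq_conj (x : O) : normSq (conj x) = normSq x := by simp [normSq_def]; ring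
@[simp] lemma normSq_θ : normSq θ = 3 := by simp [normSq_def]

lemma four_mul_normSq (x : O) : 4 * normSq x = (2 * x.re + x.im) ^ 2 + 3 * x.im ^ 2 := by
  rw [normSq_def]; ring

lemma normSq_nonneg (x : O) : 0 ≤ normSq x := by
  linarith [four_mul_normSq x, sq_nonneg (2 * x.re + x.im), sq_nonneg x.im]

lemma normSq_eq_zero {x : O} : normSq x = 0 ↔ x = 0 := by
  refine ⟨fun h ↦ ?_, by rintro rfl; simp [normSq_def]⟩
  have key := four_mul_normSq x
  have him : x.im = 0 := by nlinarith [sq_nonneg (2 * x.re + x.im)]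
  have hre : x.re = 0 := by rw [h, him] at key; nlinarith
  exact ext (by simpa using hre) (by simpa using him)

lemma normSq_pos {x : O} : 0 < normSq x ↔ x ≠ 0 := by
  rw [(normSq_nonneg x).lt_iff_ne, ne_comm, Ne, normSq_eq_zero]

instance : Nontrivial O := toQuadratic.toEquiv.nontrivial

instance : CharZero O where
  cast_injective m n h := by simpa [re] using congrArg re h

instance : IsDomain O :=
  have : NoZeroDivisors O := ⟨fun {x y} h ↦ by
    simpa [normSq_eq_zero] using (congrArg normSq h).trans (normSq_eq_zero.mpr rfl)⟩
  NoZeroDivisors.to_isDomain O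

lemma θ_ne_zero : θ ≠ 0 := normSq_pos.mp (by simp)

lemma isUnit_iff_normSq_eq_one {x : O} : IsUnit x ↔ normSq x = 1 := by
  refine ⟨fun h ↦ ?_, fun h ↦ IsUnit.of_mul_eq_one (conj x) (by rw [mul_conj, h, Int.cast_one])⟩
  exact (Int.isUnit_iff.mp (h.map normSq)).resolve_right (by linarith [normSq_nonneg x])

lemma normSq_emod_three_ne_two (x : O) : normSq x % 3 ≠ 2 := by
  rw [normSq_def]
  have h : x.re * x.re + x.re * x.im + x.im * x.im = (x.re - x.im) ^ 2 + 3 * (x.re * x.im) := by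
    ring
  rcases (by omega : (x.re - x.im) % 3 = 0 ∨ (x.re - x.im) % 3 = 1 ∨ (x.re - x.im) % 3 = 2) with
    h' | h' | h' <;> simp [h, Int.add_mul_emod_self_left, pow_two, Int.mul_emod, h']

lemma θ_dvd_of_three_dvd_normSq {x : O} (h : 3 ∣ normSq x) : θ ∣ x := by
  have hdvd : (3 : ℤ) ∣ x.re - x.im := by
    refine Int.Prime.dvd_pow' (k := 2) (by norm_num) ?_
    have : (x.re - x.im) ^ 2 = normSq x - 3 * (x.re * x.im) := by rw [normSq_def]; ring
    exact this ▸ dvd_sub h (dvd_mul_right ..)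
  obtain ⟨k, hk⟩ := hdvd
  refine ⟨(x.im + k : ℤ) - (x.im + 2 * k : ℤ) * ω, ?_⟩
  ext <;> simp <;> linarith

end O

open MulAction (orbit)
open O

/-- An `𝒪`-valued form `F`, linear in the first and conjugate-linear in the second variable, such
that `θ F` is Hermitian. A Hermitian form with values in `θ𝒪` is stored as its quotient `F` by
`θ`. -/
structure SkewHermitianForm (V : Type*) [AddCommGroup V] [Module O V] where
  /-- The underlying sesquilinear form. -/
  toSesq : V →ₗ[O] V →ₛₗ[conj] O
  skew : ∀ x y, toSesq y x = -conj (toSesq x y)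

namespace SkewHermitianForm

variable {V W : Type*} [AddCommGroup V] [Module O V] [AddCommGroup W] [Module O W]

instance : CoeFun (SkewHermitianForm V) fun _ ↦ V → V →ₛₗ[conj] O := ⟨fun F ↦ F.toSesq⟩

section General

variable (F : SkewHermitianForm V)

/-- The integral symmetric bilinear form `Tr(ψ(x, y)) / 3` underlying the Hermitian form
`ψ = θ F`. -/
def traceForm : LinearMap.BilinForm ℤ V :=
  LinearMap.mk₂ ℤ (fun x y ↦ -(F x y).im) (fun _ _ _ ↦ by simp; ring) (by simp)
    (fun _ _ _ ↦ by simp; ring) (by simp)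

lemma traceForm_apply (x y : V) : F.traceForm x y = -(F x y).im := rfl

lemma traceForm_comm (x y : V) : F.traceForm x y = F.traceForm y x := by
  simp [traceForm_apply, F.skew x y]

lemma traceForm_add_self (x y : V) :
    F.traceForm (x + y) (x + y) = F.traceForm x x + 2 * F.traceForm x y + F.traceForm y y := by
  simp only [map_add, LinearMap.add_apply, F.traceForm_comm y x]; ring

lemma traceForm_sub_self (x y : V) :
    F.traceForm (x - y) (x - y) = F.traceForm x x - 2 * F.traceForm x y + F.traceForm y y := by
  simp only [map_sub, LinearMap.sub_apply, F.traceForm_comm y x]; ring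

lemma traceForm_smul_smul (c : O) (x : V) :
    F.traceForm (c • x) (c • x) = normSq c * F.traceForm x x := by
  have : F (c • x) (c • x) = normSq c * F x x := by simp [← mul_conj]; ring
  rw [traceForm_apply, this]; simp [traceForm_apply]

lemma two_mul_re_apply_self (x : V) : 2 * (F x x).re = F.traceForm x x := by
  have := congrArg re (F.skew x x)
  simp only [re_neg, re_conj] at this
  rw [traceForm_apply]; linarith

lemma even_traceForm_self (x : V) : Even (F.traceForm x x) :=
  ⟨_, (F.two_mul_re_apply_self x).symm.trans (two_mul _)⟩

lemma two_mul_θ_mul_apply_self (x : V) : 2 * (θ * F x x) = 3 * (F.traceForm x x : ℤ) := by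
  have hre := F.two_mul_re_apply_self x
  rw [traceForm_apply] at hre ⊢
  ext <;> simp <;> linarith

/-- The group `U(V)` of isometries of a form. -/
def unitaryGroup : Subgroup (V ≃ₗ[O] V) where
  carrier := {g | ∀ x y, F (g x) (g y) = F x y}
  mul_mem' hg hh x y := (hg _ _).trans (hh x y)
  one_mem' _ _ := rfl
  inv_mem' {g} hg x y := by
    rw [← hg]; exact congrArg₂ (F · ·) (g.apply_symm_apply x) (g.apply_symm_apply y)

variable {F}

lemma traceForm_map {g : V ≃ₗ[O] V} (hg : g ∈ F.unitaryGroup) (x y : V) :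
    F.traceForm (g x) (g y) = F.traceForm x y := by
  simp [traceForm_apply, hg x y]

lemma orbit_eq_of_apply_eq {g : V ≃ₗ[O] V} (hg : g ∈ F.unitaryGroup) {x y : V} (h : g x = y) :
    orbit F.unitaryGroup x = orbit F.unitaryGroup y :=
  (MulAction.orbit_eq_iff.mpr ⟨⟨g, hg⟩, h⟩).symm

lemma orbit_pair_eq_of_apply_eq {g : V ≃ₗ[O] V} (hg : g ∈ F.unitaryGroup) {x y x' y' : V}
    (hx : g x = x') (hy : g y = y') :
    orbit F.unitaryGroup (x, y) = orbit F.unitaryGroup (x', y') :=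
  (MulAction.orbit_eq_iff.mpr ⟨⟨g, hg⟩, Prod.ext hx hy⟩).symm

lemma exists_apply_eq_of_orbit_eq {x y : V}
    (h : orbit F.unitaryGroup x = orbit F.unitaryGroup y) : ∃ g ∈ F.unitaryGroup, g x = y := by
  obtain ⟨g, hg⟩ := MulAction.orbit_eq_iff.mp h.symm
  exact ⟨g, g.2, hg⟩

lemma exists_apply_eq_of_orbit_pair_eq {x y x' y' : V}
    (h : orbit F.unitaryGroup (x, y) = orbit F.unitaryGroup (x', y')) :
    ∃ g ∈ F.unitaryGroup, g x = x' ∧ g y = y' := by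
  obtain ⟨g, hg⟩ := MulAction.orbit_eq_iff.mp h.symm
  exact ⟨g, g.2, congrArg Prod.fst hg, congrArg Prod.snd hg⟩

lemma traceForm_self_eq_of_orbit_eq {x y : V}
    (h : orbit F.unitaryGroup x = orbit F.unitaryGroup y) :
    F.traceForm x x = F.traceForm y y := by
  obtain ⟨g, hg, rfl⟩ := exists_apply_eq_of_orbit_eq h
  exact (traceForm_map hg x x).symm

lemma smulOfUnit_mem_unitaryGroup (u : Oˣ) : LinearEquiv.smulOfUnit u ∈ F.unitaryGroup := by
  intro x y
  have hu : (u : O) * conj u = 1 := by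
    rw [mul_conj, isUnit_iff_normSq_eq_one.mp u.isUnit, Int.cast_one]
  change F ((u : O) • x) ((u : O) • y) = F x y
  simp only [map_smul, LinearMap.smul_apply, map_smulₛₗ, smul_eq_mul]
  linear_combination F x y * hu

lemma orbit_smul_of_isUnit {u : O} (hu : IsUnit u) (x : V) :
    orbit F.unitaryGroup (u • x) = orbit F.unitaryGroup x :=
  (orbit_eq_of_apply_eq (smulOfUnit_mem_unitaryGroup hu.unit) rfl).symm

variable (F) in
/-- A root is a 3-vector of the Hermitian form `θ F`, that is, a vector of trace norm 2. -/
def IsRoot (r : V) : Prop := F.traceForm r r = 2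

lemma isRoot_iff {r : V} : F.IsRoot r ↔ F r r = -θ := by
  refine ⟨fun h ↦ O.ext ?_ ?_, fun h ↦ by simp [IsRoot, traceForm_apply, h]⟩
  · have := F.two_mul_re_apply_self r
    rw [h] at this; simp; linarith
  · rw [IsRoot, traceForm_apply] at h
    simp; linarith

lemma IsRoot.smul {r : V} (hr : F.IsRoot r) {u : O} (hu : IsUnit u) : F.IsRoot (u • r) := by
  rw [IsRoot, traceForm_smul_smul, isUnit_iff_normSq_eq_one.mp hu, hr, one_mul]

lemma IsRoot.map {r : V} (hr : F.IsRoot r) {g : V ≃ₗ[O] V} (hg : g ∈ F.unitaryGroup) :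
    F.IsRoot (g r) :=
  (traceForm_map hg r r).trans hr

variable (F) in
/-- The complex reflection of order 3 that multiplies the root `r` by `ω²` and fixes its
orthogonal complement. -/
def triflection (r : V) (hr : F.IsRoot r) : V ≃ₗ[O] V :=
  have key {η η' : O} (h : η + η' = η * η' * θ) :
      (LinearMap.transvection (η • F.toSesq.flip r) r).comp
        (LinearMap.transvection (η' • F.toSesq.flip r) r) = LinearMap.id := by
    ext x
    have hcoef : η' * F x r + η * (F x r + -(η' * F x r * θ)) = 0 := by
      linear_combination F x r * h
    simp [LinearMap.transvection.apply, isRoot_iff.mp hr, ← add_smul, add_assoc, hcoef]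
  LinearEquiv.ofLinearMap (LinearMap.transvection (-ω • F.toSesq.flip r) r)
    (LinearMap.transvection ((1 - ω) • F.toSesq.flip r) r)
    (key (by ext <;> simp)) (key (by ext <;> simp))

lemma triflection_apply {r : V} (hr : F.IsRoot r) (x : V) :
    F.triflection r hr x = x - (ω * F x r) • r := by
  simp [triflection, LinearMap.transvection.apply, sub_eq_add_neg]

lemma triflection_mem_unitaryGroup {r : V} (hr : F.IsRoot r) :
    F.triflection r hr ∈ F.unitaryGroup := by
  intro x y
  have hω : conj ω - ω = -θ := by ext <;> simp
  have hω' : ω * conj ω = 1 := by ext <;> simp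
  simp only [triflection_apply, map_sub, LinearMap.sub_apply, map_smul, LinearMap.smul_apply,
    map_smulₛₗ, smul_eq_mul, map_mul, isRoot_iff.mp hr, F.skew y r]
  linear_combination F x r * conj (F y r) * (-hω - θ * hω')

lemma orbit_pair_eq_triflection {r : V} (hr : F.IsRoot r) (x y : V) :
    orbit F.unitaryGroup (x, y) =
      orbit F.unitaryGroup (x - (ω * F x r) • r, y - (ω * F y r) • r) :=
  orbit_pair_eq_of_apply_eq (triflection_mem_unitaryGroup hr) (triflection_apply hr x)
    (triflection_apply hr y)

lemma orbit_pair_eq_of_apply_sub {r c d : V} (hs : F.IsRoot (c - d)) (hcd : F c r = F d r)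
    (h : F c (c - d) = 1 - ω) : orbit F.unitaryGroup (r, c) = orbit F.unitaryGroup (r, d) := by
  have hω : ω * (1 - ω) = 1 := by ext <;> simp
  have hrs : F r (c - d) = 0 := by rw [F.skew, map_sub, LinearMap.sub_apply, hcd]; simp
  rw [orbit_pair_eq_triflection hs, hrs, h, hω]
  simp

end General

section PosDef

variable {F : SkewHermitianForm V}

variable (F) in
/-- Positive definiteness of the Hermitian form `θ F`. -/
def PosDef : Prop := ∀ x, x ≠ 0 → 0 < F.traceForm x x

variable (hF : F.PosDef)
include hF

lemma PosDef.traceForm_self_nonneg (x : V) : 0 ≤ F.traceForm x x := by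
  obtain rfl | hx := eq_or_ne x 0
  · simp
  · exact (hF x hx).le

lemma PosDef.traceForm_self_eq_zero {x : V} : F.traceForm x x = 0 ↔ x = 0 :=
  ⟨fun h ↦ by_contra fun hx ↦ (hF x hx).ne' h, by rintro rfl; simp⟩

lemma PosDef.two_mul_normSq_apply_le {r : V} (hr : F.IsRoot r) (x : V) :
    2 * normSq (F x r) ≤ 3 * F.traceForm x x := by
  have hcross : F.traceForm (θ • x) (F x r • r) = -2 * normSq (F x r) := by
    have : F (θ • x) (F x r • r) = θ * normSq (F x r) := by
      simp only [map_smul, LinearMap.smul_apply, map_smulₛₗ, smul_eq_mul, ← mul_conj]; ring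
    rw [traceForm_apply, this]; simp
  have := hF.traceForm_self_nonneg (θ • x + F x r • r)
  rw [traceForm_add_self, hcross, traceForm_smul_smul, traceForm_smul_smul, normSq_θ, hr] at this
  linarith

lemma PosDef.eq_smul_of_normSq_apply_eq_three {x r : V} (hx : F.IsRoot x) (hr : F.IsRoot r)
    (h : normSq (F x r) = 3) : ∃ u : O, IsUnit u ∧ x = u • r := by
  obtain ⟨u, hu⟩ := θ_dvd_of_three_dvd_normSq (dvd_of_eq h.symm)
  have hu1 : normSq u = 1 := by
    rw [hu, map_mul, normSq_θ] at h; linarith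
  refine ⟨-u, (isUnit_iff_normSq_eq_one.mpr hu1).neg, ?_⟩
  rw [← sub_eq_zero, ← hF.traceForm_self_eq_zero, traceForm_sub_self, traceForm_smul_smul,
    normSq_neg, hu1, hx, hr]
  have : F x (-u • r) = -θ := by
    rw [map_smulₛₗ, map_neg, hu, smul_eq_mul]
    linear_combination (-θ) * mul_conj u + (-θ) * congrArg (Int.cast (R := O)) hu1
  rw [traceForm_apply, this]; simp

lemma PosDef.normSq_apply_of_isRoot {x r : V} (hx : F.IsRoot x) (hr : F.IsRoot r)
    (h : F x r ≠ 0) : normSq (F x r) = 1 ∨ normSq (F x r) = 3 := by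
  have hle := hF.two_mul_normSq_apply_le hr x
  have hpos := normSq_pos.mpr h
  have hne := normSq_emod_three_ne_two (F x r)
  rw [hx] at hle
  omega

/-- Two roots with an inner product of norm 3 are proportional. If the norm is 1, their
triflections satisfy the braid relation and their product maps one root to a multiple of the
other. -/
lemma PosDef.orbit_eq_of_apply_ne_zero {x r : V} (hx : F.IsRoot x) (hr : F.IsRoot r)
    (h : F x r ≠ 0) : orbit F.unitaryGroup x = orbit F.unitaryGroup r := by
  obtain h1 | h3 := hF.normSq_apply_of_isRoot hx hr h
  · have hmem := F.unitaryGroup.mul_mem (triflection_mem_unitaryGroup hx)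
      (triflection_mem_unitaryGroup hr)
    have hxr : F.triflection x hx (F.triflection r hr x) = -(ω * F x r) • r := by
      have hnorm : F x r * conj (F x r) = 1 := by rw [mul_conj, h1, Int.cast_one]
      have hω : ω * (-θ + ω) = 1 := by ext <;> simp
      have hcoef : ω * F (x - (ω * F x r) • r) x = 1 := by
        simp only [map_sub, LinearMap.sub_apply, map_smul, LinearMap.smul_apply, smul_eq_mul,
          isRoot_iff.mp hx, F.skew x r]
        linear_combination hω + ω ^ 2 * hnorm
      rw [triflection_apply, triflection_apply, hcoef, one_smul, neg_smul]
      abel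
    have hunit : IsUnit (-(ω * F x r)) := by
      rw [isUnit_iff_normSq_eq_one, normSq_neg, map_mul, h1, normSq_def]; simp
    exact (orbit_eq_of_apply_eq hmem hxr).trans (orbit_smul_of_isUnit hunit r)
  · obtain ⟨u, hu, rfl⟩ := hF.eq_smul_of_normSq_apply_eq_three hx hr h3
    exact orbit_smul_of_isUnit hu r

lemma PosDef.orbit_pair_eq_of_one_le_traceForm {r c d : V} (hc : F.IsRoot c) (hd : F.IsRoot d)
    (hcd : F c r = F d r) (hr : F c r ≠ 0) (h : 1 ≤ F.traceForm c d) :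
    orbit F.unitaryGroup (r, c) = orbit F.unitaryGroup (r, d) := by
  have hnorm : F.traceForm (c - d) (c - d) = 4 - 2 * F.traceForm c d := by
    rw [traceForm_sub_self, hc, hd]; ring
  have hnonneg := hF.traceForm_self_nonneg (c - d)
  obtain h2 | h1 : F.traceForm c d = 2 ∨ F.traceForm c d = 1 := by omega
  · rw [h2] at hnorm
    rw [sub_eq_zero.mp (hF.traceForm_self_eq_zero.mp hnorm)]
  have hs : F.IsRoot (c - d) := by rw [IsRoot, hnorm, h1]; norm_num
  have hs' : F.IsRoot (d - c) := by simpa using hs.smul isUnit_one.neg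
  have hcs : F c (c - d) = -θ - F c d := by rw [map_sub, isRoot_iff.mp hc]
  have hds : F d (d - c) = -θ + conj (F c d) := by rw [map_sub, isRoot_iff.mp hd, F.skew c d]; ring
  have him : (F c d).im = -1 := by rw [traceForm_apply] at h1; linarith
  have hre : (F c d).re = 0 ∨ (F c d).re = 1 := by
    have hle := hF.two_mul_normSq_apply_le hs c
    have hne : normSq (F c (c - d)) ≠ 3 := fun h3 ↦ by
      obtain ⟨u, -, hu⟩ := hF.eq_smul_of_normSq_apply_eq_three hc hs h3
      exact hr (by rw [hu]; simp [hcd])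
    have hlt : normSq (F c (c - d)) ≤ 2 := by rw [hc] at hle; omega
    rw [hcs, normSq_def] at hlt
    simp [him] at hlt
    have : 0 ≤ (F c d).re := by nlinarith
    have : (F c d).re ≤ 1 := by nlinarith
    omega
  rcases hre with hre | hre
  · exact orbit_pair_eq_of_apply_sub hs hcd (hcs.trans (by ext <;> simp [hre, him]))
  · exact (orbit_pair_eq_of_apply_sub hs' hcd.symm (hds.trans (by ext <;> simp [hre, him]))).symm

end PosDef

section AffineWeyl

variable {F : SkewHermitianForm V}

/-- Minimality of `F(hx - Nρ)` forces `x` into the alcove `∀ i, k i * N ≤ F(x, α i)`: reflecting in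
a violated wall brings `x` strictly closer to the multiple `Nρ/h` of the Weyl vector. -/
theorem PosDef.affineWeyl_induction (hF : F.PosDef) {ι : Type*} {α : ι → V}
    (hα : ∀ i, F.IsRoot (α i)) {k : ι → ℤ} {ρ : V} {h N : ℤ} (hh : 0 < h) (hN : 0 < N)
    (hρ : ∀ i, F.traceForm ρ (α i) = 1 + h * k i) {P : V → Prop}
    (alcove : ∀ x, (∀ i, k i * N ≤ F.traceForm x (α i)) → P x)
    (reflect : ∀ i x, P (x - (F.traceForm x (α i) - k i * N) • α i) → P x) (x : V) : P x := by
  induction hm : (F.traceForm (h • x - N • ρ) (h • x - N • ρ)).toNat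
    using Nat.strong_induction_on generalizing x with
  | _ m ih =>
    by_cases hx : ∀ i, k i * N ≤ F.traceForm x (α i)
    · exact alcove x hx
    push Not at hx
    obtain ⟨i, hi⟩ := hx
    refine reflect i x (ih _ ?_ _ rfl)
    set t := F.traceForm x (α i) - k i * N with ht
    have hdist : F.traceForm (h • (x - t • α i) - N • ρ) (h • (x - t • α i) - N • ρ) =
        F.traceForm (h • x - N • ρ) (h • x - N • ρ) + 2 * h * N * t := by
      have hroot : F.traceForm (α i) (α i) = 2 := hα i
      rw [show h • (x - t • α i) - N • ρ = (h • x - N • ρ) - (h * t) • α i by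
        rw [smul_sub, mul_smul]; abel, traceForm_sub_self]
      simp only [map_sub, map_smul, LinearMap.sub_apply, LinearMap.smul_apply, smul_eq_mul, hρ,
        hroot]
      rw [sub_eq_iff_eq_add.mp ht.symm]
      ring
    have hneg : 2 * h * N * t < 0 := mul_neg_of_pos_of_neg (by positivity) (by linarith)
    have := hF.traceForm_self_nonneg (h • (x - t • α i) - N • ρ)
    omega

/-- The real reflection `x ↦ x - Tr(ψ(x, r)) / 3 • r` of the underlying integral lattice. -/
def reflection (r : V) (hr : F.IsRoot r) : V ≃ₗ[ℤ] V :=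
  Module.reflection (f := F.traceForm.flip r) hr

lemma reflection_apply {r : V} (hr : F.IsRoot r) (x : V) :
    reflection r hr x = x - F.traceForm x r • r :=
  Module.reflection_apply ..

lemma traceForm_reflection {r : V} (hr : F.IsRoot r) (x : V) :
    F.traceForm (reflection r hr x) (reflection r hr x) = F.traceForm x x := by
  have hr' : F.traceForm r r = 2 := hr
  rw [reflection_apply, traceForm_sub_self]
  simp only [map_smul, LinearMap.smul_apply, smul_eq_mul, hr']
  ring

end AffineWeyl

section Prod

/-- The orthogonal direct sum of two forms. -/
def prod (F : SkewHermitianForm V) (G : SkewHermitianForm W) : SkewHermitianForm (V × W) where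
  toSesq := LinearMap.mk₂'ₛₗ (RingHom.id O) conj (fun x y ↦ F x.1 y.1 + G x.2 y.2)
    (fun _ _ _ ↦ by simp; ring) (fun _ _ _ ↦ by simp; ring)
    (fun _ _ _ ↦ by simp; ring) (fun _ _ _ ↦ by simp; ring)
  skew x y := by simp [F.skew x.1, G.skew x.2]; ring

variable {F : SkewHermitianForm V} {G : SkewHermitianForm W}

lemma prod_apply (x y : V × W) : F.prod G x y = F x.1 y.1 + G x.2 y.2 := rfl

lemma traceForm_prod (x y : V × W) :
    (F.prod G).traceForm x y = F.traceForm x.1 y.1 + G.traceForm x.2 y.2 := by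
  simp [traceForm_apply, prod_apply, add_comm]

lemma prodCongr_mem_unitaryGroup {g : V ≃ₗ[O] V} {h : W ≃ₗ[O] W} (hg : g ∈ F.unitaryGroup)
    (hh : h ∈ G.unitaryGroup) : g.prodCongr h ∈ (F.prod G).unitaryGroup := fun x y ↦ by
  simp [prod_apply, hg x.1 y.1, hh x.2 y.2]

lemma prodComm_mem_unitaryGroup : LinearEquiv.prodComm O V V ∈ (F.prod F).unitaryGroup :=
  fun _ _ ↦ add_comm ..

lemma orbit_prod_eq {x x' : V} {y y' : W} (hx : orbit F.unitaryGroup x = orbit F.unitaryGroup x')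
    (hy : orbit G.unitaryGroup y = orbit G.unitaryGroup y') :
    orbit (F.prod G).unitaryGroup (x, y) = orbit (F.prod G).unitaryGroup (x', y') := by
  obtain ⟨g, hg, rfl⟩ := exists_apply_eq_of_orbit_eq hx
  obtain ⟨h, hh, rfl⟩ := exists_apply_eq_of_orbit_eq hy
  exact orbit_eq_of_apply_eq (prodCongr_mem_unitaryGroup hg hh) rfl

end Prod

end SkewHermitianForm

open SkewHermitianForm

/-- The `𝒪`-lattice `Λ⁴`, whose underlying integral lattice is the `E₈` root lattice. Its Hermitian
form has Gram matrix `3` on the diagonal and `θ` on the superdiagonal. -/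
def e8 : SkewHermitianForm (Fin 4 → O) where
  toSesq := LinearMap.mk₂'ₛₗ (RingHom.id O) conj
    (fun x y ↦ -θ * ∑ i, x i * conj (y i) +
      ∑ i : Fin 3, (x i.castSucc * conj (y i.succ) - x i.succ * conj (y i.castSucc)))
    (by intros; simp [Fin.sum_univ_succ]; ring) (by intros; simp [Fin.sum_univ_succ]; ring)
    (by intros; simp [Fin.sum_univ_succ]; ring) (by intros; simp [Fin.sum_univ_succ]; ring)
  skew x y := by simp [Fin.sum_univ_succ, conj_θ]; ring

namespace e8

lemma apply (x y : Fin 4 → O) : e8 x y =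
    -θ * (x 0 * conj (y 0) + x 1 * conj (y 1) + x 2 * conj (y 2) + x 3 * conj (y 3)) +
      (x 0 * conj (y 1) - x 1 * conj (y 0) + (x 1 * conj (y 2) - x 2 * conj (y 1)) +
        (x 2 * conj (y 3) - x 3 * conj (y 2))) := by
  simp [e8, Fin.sum_univ_succ]; ring

lemma posDef : e8.PosDef := by
  intro x hx
  by_contra! hle
  have hsq : 9 * e8.traceForm x x = 2 * normSq (3 * x 0 - θ * x 1) +
      3 * normSq (2 * x 1 - θ * x 2) + normSq (3 * x 2 - 2 * θ * x 3) + 6 * normSq (x 3) := by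
    simp [traceForm_apply, apply, normSq_def]; ring
  have h0 := normSq_nonneg (3 * x 0 - θ * x 1)
  have h1 := normSq_nonneg (2 * x 1 - θ * x 2)
  have h2 := normSq_nonneg (3 * x 2 - 2 * θ * x 3)
  have h3 := normSq_nonneg (x 3)
  have hx3 : x 3 = 0 := normSq_eq_zero.mp (by linarith)
  have hx2 : x 2 = 0 := by
    have := normSq_eq_zero.mp (by linarith : normSq (3 * x 2 - 2 * θ * x 3) = 0)
    simpa [hx3] using this
  have hx1 : x 1 = 0 := by
    have := normSq_eq_zero.mp (by linarith : normSq (2 * x 1 - θ * x 2) = 0)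
    simpa [hx2] using this
  have hx0 : x 0 = 0 := by
    have := normSq_eq_zero.mp (by linarith : normSq (3 * x 0 - θ * x 1) = 0)
    simpa [hx1] using this
  refine hx (funext fun i ↦ ?_)
  fin_cases i <;> assumption

/-- Simple roots of the underlying `E₈` lattice, in the (Bourbaki) numbering of `CartanMatrix.E₈`;
any choice of vectors with this Gram matrix would do. -/
def simpleRoot : Fin 8 → Fin 4 → O :=
  ![![0, 0, 1 - ω, -1], ![0, ω - 1, 0, 0], ![ω, 1, 0, 0], ![0, 1 - ω, -ω, 0], ![-1, ω - 1, ω, 0],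
    ![1 - ω, 0, 0, 0], ![0, -1, ω, 1], ![0, 0, 0, -ω]]

lemma traceForm_simpleRoot (i j : Fin 8) :
    e8.traceForm (simpleRoot i) (simpleRoot j) = CartanMatrix.E₈ i j := by
  fin_cases i <;> fin_cases j <;>
    simp [traceForm_apply, apply, simpleRoot, CartanMatrix.E₈]

/-- The inverse of the Cartan matrix of type `E₈`. -/
def inverseCartan : Matrix (Fin 8) (Fin 8) ℤ :=
  !![4, 5, 7, 10, 8, 6, 4, 2;
     5, 8, 10, 15, 12, 9, 6, 3;
     7, 10, 14, 20, 16, 12, 8, 4;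
     10, 15, 20, 30, 24, 18, 12, 6;
     8, 12, 16, 24, 20, 15, 10, 5;
     6, 9, 12, 18, 15, 12, 8, 4;
     4, 6, 8, 12, 10, 8, 6, 3;
     2, 3, 4, 6, 5, 4, 3, 2]

lemma inverseCartan_mul : inverseCartan * CartanMatrix.E₈ = 1 := by decide +kernel

/-- The basis dual to the simple roots, which lies in the lattice because `E₈` is unimodular. -/
def fundamentalWeight (i : Fin 8) : Fin 4 → O := ∑ j, inverseCartan i j • simpleRoot j

lemma eq_zero_of_traceForm_simpleRoot_eq_zero {x : Fin 4 → O}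
    (h : ∀ i, e8.traceForm x (simpleRoot i) = 0) : x = 0 := by
  simp only [Fin.forall_fin_succ, traceForm_apply, apply, simpleRoot] at h
  simp at h
  ext i <;> fin_cases i <;> simp <;> omega

lemma traceForm_fundamentalWeight_simpleRoot (i j : Fin 8) :
    e8.traceForm (fundamentalWeight i) (simpleRoot j) = (1 : Matrix (Fin 8) (Fin 8) ℤ) i j := by
  simp only [fundamentalWeight, map_sum, map_smul, LinearMap.sum_apply, LinearMap.smul_apply,
    smul_eq_mul, traceForm_simpleRoot, ← inverseCartan_mul, Matrix.mul_apply]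

lemma sum_traceForm_smul_fundamentalWeight (x : Fin 4 → O) :
    ∑ i, e8.traceForm x (simpleRoot i) • fundamentalWeight i = x := by
  refine sub_eq_zero.mp (eq_zero_of_traceForm_simpleRoot_eq_zero fun j ↦ ?_)
  simp only [map_sub, LinearMap.sub_apply, map_sum, map_smul, LinearMap.sum_apply,
    LinearMap.smul_apply, smul_eq_mul, traceForm_fundamentalWeight_simpleRoot, Matrix.one_apply,
    mul_ite, mul_one, mul_zero, Finset.sum_ite_eq', Finset.mem_univ, if_true, sub_self]

lemma traceForm_fundamentalWeight (x : Fin 4 → O) (i : Fin 8) :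
    e8.traceForm x (fundamentalWeight i) =
      ∑ j, inverseCartan i j * e8.traceForm x (simpleRoot j) := by
  simp only [fundamentalWeight, map_sum, map_smul, smul_eq_mul]

lemma traceForm_fundamentalWeight_fundamentalWeight (i j : Fin 8) :
    e8.traceForm (fundamentalWeight i) (fundamentalWeight j) = inverseCartan j i := by
  simp only [traceForm_fundamentalWeight, traceForm_fundamentalWeight_simpleRoot,
    Matrix.one_apply, mul_ite, mul_one, mul_zero, Finset.sum_ite_eq, Finset.mem_univ, if_true]

lemma traceForm_self_eq_sum (x : Fin 4 → O) :
    e8.traceForm x x = ∑ i, ∑ j, inverseCartan i j *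
      (e8.traceForm x (simpleRoot i) * e8.traceForm x (simpleRoot j)) := by
  nth_rw 2 [← sum_traceForm_smul_fundamentalWeight x]
  simp only [map_sum, map_smul, smul_eq_mul, traceForm_fundamentalWeight, Finset.mul_sum]
  exact Finset.sum_congr rfl fun i _ ↦ Finset.sum_congr rfl fun j _ ↦ by ring

/-- The highest root of `E₈`, which is the fundamental weight of the last simple root. -/
def highestRoot : Fin 4 → O := fundamentalWeight 7

lemma sq_traceForm_highestRoot_sub_traceForm_self (x : Fin 4 → O) :
    e8.traceForm x highestRoot ^ 2 - e8.traceForm x x =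
      ∑ i, ∑ j, (inverseCartan 7 i * inverseCartan 7 j - inverseCartan i j) *
        (e8.traceForm x (simpleRoot i) * e8.traceForm x (simpleRoot j)) := by
  rw [highestRoot, traceForm_fundamentalWeight, traceForm_self_eq_sum, sq, Finset.sum_mul_sum]
  simp only [← Finset.sum_sub_distrib]
  exact Finset.sum_congr rfl fun i _ ↦ Finset.sum_congr rfl fun j _ ↦ by ring

lemma inverseCartan_le (i j : Fin 8) :
    inverseCartan i j ≤ inverseCartan 7 i * inverseCartan 7 j := by
  revert j; fin_cases i <;> decide +kernel

lemma inverseCartan_lt {i : Fin 8} (hi : i ≠ 0) :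
    inverseCartan i i < inverseCartan 7 i * inverseCartan 7 i := by
  revert i; decide +kernel

/-- In the alcove the norm is largest at the vertex where only the first coordinate survives: this
is the deep hole of the lattice. -/
lemma traceForm_self_le_of_alcove {x : Fin 4 → O} {N : ℤ}
    (h0 : ∀ i, 0 ≤ e8.traceForm x (simpleRoot i)) (hN : e8.traceForm x highestRoot ≤ N) :
    e8.traceForm x x ≤ N ^ 2 ∧
      (e8.traceForm x x = N ^ 2 → (2 : ℤ) • x = N • fundamentalWeight 0) := by
  have hsum := sq_traceForm_highestRoot_sub_traceForm_self x
  have hhigh : 0 ≤ e8.traceForm x highestRoot := by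
    rw [highestRoot, traceForm_fundamentalWeight]
    exact Finset.sum_nonneg fun j _ ↦ mul_nonneg (by fin_cases j <;> decide) (h0 j)
  have hsq : e8.traceForm x highestRoot ^ 2 ≤ N ^ 2 := by gcongr
  obtain ⟨c, hc⟩ : ∃ c : Fin 8 → ℤ, ∀ i, e8.traceForm x (simpleRoot i) = c i := ⟨_, fun _ ↦ rfl⟩
  simp only [hc] at h0 hsum
  have hterm : ∀ i j, 0 ≤ (inverseCartan 7 i * inverseCartan 7 j - inverseCartan i j) *
      (c i * c j) := fun i j ↦
    mul_nonneg (sub_nonneg.mpr (inverseCartan_le i j)) (mul_nonneg (h0 i) (h0 j))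
  have hrow : (0 : Fin 8 → ℤ) ≤ fun i ↦
      ∑ j, (inverseCartan 7 i * inverseCartan 7 j - inverseCartan i j) * (c i * c j) :=
    fun i ↦ Fintype.sum_nonneg (hterm i)
  refine ⟨by linarith [Fintype.sum_nonneg hrow], fun heq ↦ ?_⟩
  have hzero : ∀ i ≠ 0, c i = 0 := fun i hi ↦ by
    have hsum0 := (Fintype.sum_eq_zero_iff_of_nonneg hrow).mp
      (by linarith [Fintype.sum_nonneg hrow])
    have hdiag := congrFun ((Fintype.sum_eq_zero_iff_of_nonneg (hterm i)).mp (congrFun hsum0 i)) i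
    simpa [sub_ne_zero.mpr (inverseCartan_lt hi).ne'] using hdiag
  have hx : x = c 0 • fundamentalWeight 0 := by
    conv_lhs => rw [← sum_traceForm_smul_fundamentalWeight x]
    rw [← hc]
    exact Fintype.sum_eq_single 0 fun i hi ↦ by rw [hc, hzero i hi, zero_smul]
  have hN' : N = 2 * c 0 := by
    have h4 : N ^ 2 = 4 * c 0 ^ 2 := by
      rw [← heq, hx]
      simp only [map_smul, LinearMap.smul_apply, smul_eq_mul,
        traceForm_fundamentalWeight_fundamentalWeight, inverseCartan]
      simp; ring
    nlinarith [h0 0]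
  rw [hN', mul_smul, ← hx]

/-- `x` lies within the covering radius of `d E₈`, scaled by `d`; on the boundary it is moreover the
deep hole given by half of `d` times a vector of norm 4. -/
def InCoveringBall (d : O) (x : Fin 4 → O) : Prop :=
  e8.traceForm x x ≤ normSq d ∧
    (e8.traceForm x x = normSq d → ∃ z, e8.traceForm z z = 4 ∧ (2 : O) • x = d • z)

lemma inCoveringBall_intCast {N : ℤ} {x : Fin 4 → O} : InCoveringBall N x ↔
    e8.traceForm x x ≤ N ^ 2 ∧
      (e8.traceForm x x = N ^ 2 → ∃ z, e8.traceForm z z = 4 ∧ (2 : ℤ) • x = N • z) := by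
  simp only [InCoveringBall, normSq_def, re_intCast, im_intCast, mul_zero, ← sq, add_zero,
    zero_pow two_ne_zero, ← Int.cast_smul_eq_zsmul O, Int.cast_ofNat]

lemma InCoveringBall.reflection {N : ℤ} {x r : Fin 4 → O} (hx : InCoveringBall N x)
    (hr : e8.IsRoot r) : InCoveringBall N (SkewHermitianForm.reflection r hr x) := by
  rw [inCoveringBall_intCast] at hx ⊢
  rw [traceForm_reflection]
  refine ⟨hx.1, fun h ↦ ?_⟩
  obtain ⟨z, hz, hxz⟩ := hx.2 h
  exact ⟨_, (traceForm_reflection hr z).trans hz, by rw [← map_zsmul, ← map_zsmul, hxz]⟩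

lemma isRoot_simpleRoot (i : Fin 8) : e8.IsRoot (simpleRoot i) := by
  rw [SkewHermitianForm.IsRoot, traceForm_simpleRoot, CartanMatrix.E₈_diag]

lemma isRoot_neg_highestRoot : e8.IsRoot (-highestRoot) := by
  rw [SkewHermitianForm.IsRoot, map_neg, map_neg, LinearMap.neg_apply, neg_neg, highestRoot,
    traceForm_fundamentalWeight_fundamentalWeight]
  rfl

/-- The simple roots and the negative of the highest root: the nodes of the affine `E₈` diagram. -/
def affineRoot : Option (Fin 8) → Fin 4 → O := fun i ↦ i.elim (-highestRoot) simpleRoot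

lemma isRoot_affineRoot (i : Option (Fin 8)) : e8.IsRoot (affineRoot i) := by
  cases i with
  | none => exact isRoot_neg_highestRoot
  | some i => exact isRoot_simpleRoot i

/-- The level of the wall of the fundamental alcove that belongs to an affine root. -/
def affineLevel : Option (Fin 8) → ℤ := fun i ↦ i.elim (-1) 0

/-- The sum of the marks of `E₈` is `29`, so its Coxeter number is `30`. -/
lemma traceForm_weylVector_affineRoot (i : Option (Fin 8)) :
    e8.traceForm (∑ j, fundamentalWeight j) (affineRoot i) = 1 + 30 * affineLevel i := by
  cases i with
  | none =>
    simp only [affineRoot, affineLevel, Option.elim, highestRoot, map_neg, map_sum,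
      LinearMap.sum_apply, traceForm_fundamentalWeight_fundamentalWeight]
    decide
  | some i =>
    simp [affineRoot, affineLevel, traceForm_fundamentalWeight_simpleRoot, Matrix.one_apply]

lemma exists_inCoveringBall_intCast {N : ℤ} (hN : 0 < N) (x : Fin 4 → O) :
    ∃ l : Fin 4 → O, InCoveringBall N (x - N • l) := by
  induction x using posDef.affineWeyl_induction isRoot_affineRoot (by norm_num) hN
    traceForm_weylVector_affineRoot with
  | alcove x hx =>
    refine ⟨0, ?_⟩
    rw [smul_zero, sub_zero, inCoveringBall_intCast]
    obtain ⟨hle, heq⟩ := traceForm_self_le_of_alcove (x := x) (N := N)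
      (fun i ↦ by simpa [affineRoot, affineLevel] using hx (some i))
      (by simpa [affineRoot, affineLevel] using hx none)
    exact ⟨hle, fun h ↦ ⟨_, traceForm_fundamentalWeight_fundamentalWeight 0 0, heq h⟩⟩
  | reflect i x ih =>
    obtain ⟨l, hl⟩ := ih
    have hr := isRoot_affineRoot i
    refine ⟨SkewHermitianForm.reflection _ hr l + affineLevel i • affineRoot i, ?_⟩
    convert hl.reflection hr using 1
    have hself : SkewHermitianForm.reflection _ hr (affineRoot i) = -affineRoot i :=
      Module.reflection_apply_self _
    rw [map_sub, map_zsmul, map_sub, map_zsmul, hself, reflection_apply hr x]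
    module

theorem exists_inCoveringBall {d : O} (hd : d ≠ 0) (x : Fin 4 → O) :
    ∃ l : Fin 4 → O, InCoveringBall d (x - d • l) := by
  have hpos := normSq_pos.mpr hd
  obtain ⟨l, hle, heq⟩ := exists_inCoveringBall_intCast hpos (conj d • x)
  have hsmul : conj d • x - normSq d • l = conj d • (x - d • l) := by
    rw [smul_sub, smul_smul, mul_comm, mul_conj, Int.cast_smul_eq_zsmul]
  have hnorm : normSq (normSq d : O) = normSq d * normSq d := by simp [normSq_def (normSq d : O)]
  rw [hsmul, traceForm_smul_smul, normSq_conj, hnorm] at hle heq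
  refine ⟨l, le_of_mul_le_mul_left hle hpos, fun h ↦ ?_⟩
  obtain ⟨z, hz, hxz⟩ := heq (by rw [h])
  have hd' : conj d ≠ 0 := fun h0 ↦ hd (by simpa using congrArg conj h0)
  refine ⟨z, hz, smul_right_injective _ hd' ?_⟩
  simp only
  rw [smul_comm, hxz, ← mul_conj, mul_comm, mul_smul]

/-- The basis `r₁, …, r₄` of `Λ⁴`, indexed from `0`. -/
def basisRoot (i : Fin 4) : Fin 4 → O := Pi.single i 1

lemma isRoot_basisRoot (i : Fin 4) : e8.IsRoot (basisRoot i) := by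
  fin_cases i <;> simp [isRoot_iff, apply, basisRoot]

lemma apply_basisRoot_castSucc_succ (i : Fin 3) :
    e8 (basisRoot i.castSucc) (basisRoot i.succ) = 1 := by
  fin_cases i <;> simp [apply, basisRoot]

lemma apply_eq_sum (x y : Fin 4 → O) : e8 x y = ∑ i, conj (y i) * e8 x (basisRoot i) := by
  simp [apply, basisRoot, Fin.sum_univ_four]; ring

lemma orbit_basisRoot (i : Fin 4) :
    orbit e8.unitaryGroup (basisRoot i) = orbit e8.unitaryGroup (basisRoot 0) := by
  induction i using Fin.induction with
  | zero => rfl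
  | succ i ih =>
    rw [← ih]
    refine (posDef.orbit_eq_of_apply_ne_zero (isRoot_basisRoot _) (isRoot_basisRoot _) ?_).symm
    rw [apply_basisRoot_castSucc_succ]
    exact one_ne_zero

lemma orbit_eq_of_isRoot {x : Fin 4 → O} (hx : e8.IsRoot x) :
    orbit e8.unitaryGroup x = orbit e8.unitaryGroup (basisRoot 0) := by
  obtain ⟨i, hi⟩ : ∃ i, e8 x (basisRoot i) ≠ 0 := by
    by_contra! h
    have h0 : e8 x x = 0 := by simp [apply_eq_sum x x, h]
    exact θ_ne_zero (neg_eq_zero.mp ((isRoot_iff.mp hx).symm.trans h0))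
  exact (posDef.orbit_eq_of_apply_ne_zero hx (isRoot_basisRoot i) hi).trans (orbit_basisRoot i)

/-- A vector of norm 4 is congruent modulo `θ` to a root. Of the three unit multiples of that root
in its congruence class, which sum to zero, one has a nonnegative product with the vector. -/
lemma exists_isRoot_add_θ_smul {x : Fin 4 → O} (hx : e8.traceForm x x = 4) :
    ∃ a y, e8.IsRoot a ∧ x = a + θ • y ∧ 0 ≤ e8.traceForm x a := by
  obtain ⟨l, hle, -⟩ := exists_inCoveringBall θ_ne_zero x
  obtain ⟨a, ha⟩ : ∃ a, a = x - θ • l := ⟨_, rfl⟩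
  rw [← ha, normSq_θ] at hle
  have hxa : x = a + θ • l := by rw [ha]; abel
  have hroot : e8.IsRoot a := by
    have h0 : e8.traceForm a a ≠ 0 := fun h ↦ by
      rw [hxa, posDef.traceForm_self_eq_zero.mp h, zero_add, traceForm_smul_smul, normSq_θ] at hx
      omega
    have := posDef.traceForm_self_nonneg a
    obtain ⟨k, hk⟩ := e8.even_traceForm_self a
    rw [SkewHermitianForm.IsRoot]
    omega
  have hsum : e8.traceForm x a + e8.traceForm x ((ω - 1) • a) + e8.traceForm x (-ω • a) = 0 := by
    rw [← map_add, ← map_add, show a + (ω - 1) • a + -ω • a = 0 by module, map_zero]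
  by_cases h1 : 0 ≤ e8.traceForm x a
  · exact ⟨a, l, hroot, hxa, h1⟩
  by_cases h2 : 0 ≤ e8.traceForm x ((ω - 1) • a)
  · refine ⟨(ω - 1) • a, l - ω • a, hroot.smul ?_, ?_, h2⟩
    · simp [isUnit_iff_normSq_eq_one, normSq_def]
    · have hω : (ω - 1) - θ * ω = 1 := by ext <;> simp
      linear_combination (norm := module) hxa - hω • a
  · refine ⟨-ω • a, l + (1 - ω) • a, hroot.smul ?_, ?_, by linarith⟩
    · simp [isUnit_iff_normSq_eq_one, normSq_def]
    · have hω : -ω + θ * (1 - ω) = 1 := by ext <;> simp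
      linear_combination (norm := module) hxa - hω • a

lemma apply_eq_one_of_traceForm_θ_smul {a y : Fin 4 → O} (ha : e8.IsRoot a) (hy : e8.IsRoot y)
    (h : e8.traceForm (θ • y) a = -2) : e8 y a = 1 := by
  have hle := posDef.two_mul_normSq_apply_le ha y
  have hθ : 2 * (e8 y a).re + (e8 y a).im = 2 := by
    simp only [traceForm_apply, map_smul, LinearMap.smul_apply, smul_eq_mul, im_mul, re_θ, im_θ]
      at h
    linarith
  have h4 := four_mul_normSq (e8 y a)
  rw [hy] at hle
  rw [hθ] at h4
  have him : (e8 y a).im = 0 := by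
    have : (e8 y a).im ^ 2 < 2 ^ 2 := by omega
    obtain ⟨h1, h2⟩ := abs_lt.mp (abs_lt_of_sq_lt_sq this (by norm_num))
    omega
  exact O.ext (by rw [re_one]; omega) (by rw [him, im_one])

lemma exists_isRoot_add_isRoot {x : Fin 4 → O} (hx : e8.traceForm x x = 4) :
    ∃ p q, e8.IsRoot p ∧ e8.IsRoot q ∧ e8 p q = 1 ∧ x = p + q := by
  obtain ⟨a, y, ha, rfl, hxa⟩ := exists_isRoot_add_θ_smul hx
  have hnorm : 3 * e8.traceForm y y = 6 - 2 * e8.traceForm (a + θ • y) a := by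
    have := traceForm_sub_self e8 (a + θ • y) a
    rw [hx, ha, add_sub_cancel_left, traceForm_smul_smul, normSq_θ] at this
    linarith
  have hy0 : e8.traceForm y y ≠ 0 := fun h ↦ by
    rw [posDef.traceForm_self_eq_zero.mp h, smul_zero, add_zero, ha] at hx
    omega
  have hy : e8.IsRoot y := by
    have := posDef.traceForm_self_nonneg y
    obtain ⟨k, hk⟩ := e8.even_traceForm_self y
    rw [SkewHermitianForm.IsRoot]
    omega
  have hya : e8 y a = 1 := apply_eq_one_of_traceForm_θ_smul ha hy (by
    rw [map_add, LinearMap.add_apply, ha, hy] at hnorm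
    linarith)
  have hay : e8 a y = -1 := by rw [e8.skew, hya, map_one]
  refine ⟨(ω - 1) • y, a + ω • y, hy.smul ?_, ?_, ?_, ?_⟩
  · simp [isUnit_iff_normSq_eq_one, normSq_def]
  · have hω : normSq ω = 1 := by simp [normSq_def]
    rw [SkewHermitianForm.IsRoot, traceForm_add_self, traceForm_smul_smul, ha, hy, hω,
      traceForm_apply, map_smulₛₗ, hay]
    simp
  · simp only [map_add, map_smul, map_smulₛₗ, LinearMap.smul_apply, smul_eq_mul, hya,
      isRoot_iff.mp hy]
    ext <;> simp
  · have hω : θ = ω - 1 + ω := by ext <;> simp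
    rw [hω]
    module

/-- The roots `c` with `ψ(r₁, c) = θ`, such as `r₂`. -/
def adjacentRoots : Set (Fin 4 → O) := {c | e8.IsRoot c ∧ e8 c (basisRoot 0) = -1}

lemma orbit_basisRoot_pair_eq_of_one_le_traceForm {c d : Fin 4 → O} (hc : c ∈ adjacentRoots)
    (hd : d ∈ adjacentRoots) (h : 1 ≤ e8.traceForm c d) :
    orbit e8.unitaryGroup (basisRoot 0, c) = orbit e8.unitaryGroup (basisRoot 0, d) :=
  posDef.orbit_pair_eq_of_one_le_traceForm hc.1 hd.1 (hc.2.trans hd.2.symm) (by simp [hc.2]) h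

/-- Any root adjacent to `r₁` is joined to `r₂` by a chain of at most four adjacent roots with
successive trace products at least 1. The first step is chosen among three roots that sum to
`-θ r₁`. -/
lemma orbit_basisRoot_pair {c : Fin 4 → O} (hc : c ∈ adjacentRoots) :
    orbit e8.unitaryGroup (basisRoot 0, c) = orbit e8.unitaryGroup (basisRoot 0, basisRoot 1) := by
  have h1 : basisRoot 1 ∈ adjacentRoots := ⟨isRoot_basisRoot 1, by simp [apply, basisRoot]⟩
  have h2 : ![-ω, ω - 1, 0, 0] ∈ adjacentRoots := by
    simp [adjacentRoots, isRoot_iff, apply, basisRoot, O.ext_iff]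
  have h2' : ![0, 1, -ω, 0] ∈ adjacentRoots := by
    simp [adjacentRoots, isRoot_iff, apply, basisRoot, O.ext_iff]
  have h3 : ![1 - ω, -ω, 0, 0] ∈ adjacentRoots := by
    simp [adjacentRoots, isRoot_iff, apply, basisRoot, O.ext_iff]
  have h3' : ![0, 1, 1 - ω, 0] ∈ adjacentRoots := by
    simp [adjacentRoots, isRoot_iff, apply, basisRoot, O.ext_iff]
  have hsum : e8.traceForm c (basisRoot 1) + e8.traceForm c ![-ω, ω - 1, 0, 0] +
      e8.traceForm c ![1 - ω, -ω, 0, 0] = 2 := by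
    have : basisRoot 1 + ![-ω, ω - 1, 0, 0] + ![1 - ω, -ω, 0, 0] = -θ • basisRoot 0 := by
      funext i
      fin_cases i <;> ext <;> simp [basisRoot, Matrix.vecHead, Matrix.vecTail]
    rw [← map_add, ← map_add, this, traceForm_apply, map_smulₛₗ, hc.2]
    simp
  obtain h | h | h : 1 ≤ e8.traceForm c (basisRoot 1) ∨
      1 ≤ e8.traceForm c ![-ω, ω - 1, 0, 0] ∨ 1 ≤ e8.traceForm c ![1 - ω, -ω, 0, 0] := by
    omega
  · exact orbit_basisRoot_pair_eq_of_one_le_traceForm hc h1 h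
  · refine (orbit_basisRoot_pair_eq_of_one_le_traceForm hc h2 h).trans
      ((orbit_basisRoot_pair_eq_of_one_le_traceForm h2 h2' ?_).trans
        (orbit_basisRoot_pair_eq_of_one_le_traceForm h2' h1 ?_))
    all_goals simp [traceForm_apply, apply, basisRoot]
  · refine (orbit_basisRoot_pair_eq_of_one_le_traceForm hc h3 h).trans
      ((orbit_basisRoot_pair_eq_of_one_le_traceForm h3 h3' ?_).trans
        (orbit_basisRoot_pair_eq_of_one_le_traceForm h3' h1 ?_))
    all_goals simp [traceForm_apply, apply, basisRoot]

theorem orbit_eq_of_traceForm_self_eq_four {x : Fin 4 → O} (hx : e8.traceForm x x = 4) :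
    orbit e8.unitaryGroup x = orbit e8.unitaryGroup (basisRoot 0 + basisRoot 1) := by
  obtain ⟨p, q, hp, hq, hpq, rfl⟩ := exists_isRoot_add_isRoot hx
  obtain ⟨g, hg, hgp⟩ := exists_apply_eq_of_orbit_eq (orbit_eq_of_isRoot hp)
  have hgq : g q ∈ adjacentRoots := ⟨hq.map hg, by rw [← hgp, hg, e8.skew, hpq, map_one]⟩
  obtain ⟨h, hh, hh0, hhq⟩ :=
    exists_apply_eq_of_orbit_pair_eq (orbit_basisRoot_pair hgq)
  refine orbit_eq_of_apply_eq (e8.unitaryGroup.mul_mem hh hg) ?_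
  rw [map_add, LinearEquiv.mul_apply, LinearEquiv.mul_apply, hgp, hh0, hhq]

end e8

namespace SkewHermitianForm

variable {V : Type*} [AddCommGroup V] [Module O V]

/-- The form `H_𝒪 / θ` of the hyperbolic plane. -/
def hyperbolicPlane : SkewHermitianForm (O × O) where
  toSesq := LinearMap.mk₂'ₛₗ (RingHom.id O) conj (fun x y ↦ x.1 * conj y.2 - x.2 * conj y.1)
    (fun _ _ _ ↦ by simp; ring) (fun _ _ _ ↦ by simp; ring)
    (fun _ _ _ ↦ by simp; ring) (fun _ _ _ ↦ by simp; ring)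
  skew x y := by simp; ring

lemma hyperbolicPlane_apply (x y : O × O) :
    hyperbolicPlane x y = x.1 * conj y.2 - x.2 * conj y.1 := rfl

lemma traceForm_hyperbolicPlane_self (x : O × O) :
    hyperbolicPlane.traceForm x x = -2 * (x.1 * conj x.2).im := by
  simp [traceForm_apply, hyperbolicPlane_apply]; ring

/-- The rotation `(a, d) ↦ (-d, a)` of the hyperbolic plane. -/
def hyperbolicSwap : (O × O) ≃ₗ[O] O × O :=
  (LinearEquiv.prodComm O O O).trans ((LinearEquiv.neg O).prodCongr (LinearEquiv.refl O O))

lemma hyperbolicSwap_mem_unitaryGroup : hyperbolicSwap ∈ hyperbolicPlane.unitaryGroup :=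
  fun x y ↦ by simp [hyperbolicSwap, hyperbolicPlane_apply]; ring

section Eichler

variable (V) in
/-- The isotropic vector `e` of `V ⊥ H_𝒪`. -/
def isotropicVector : V × O × O := (0, 1, 0)

variable (F : SkewHermitianForm V)

/-- The Eichler transvection along `w`, which fixes `isotropicVector V`. It is an
isometry when `c - conj c = F w w`. -/
def eichler (w : V) (c : O) : (V × O × O) ≃ₗ[O] V × O × O where
  toFun v := (v.1 - v.2.2 • w, v.2.1 + F v.1 w - c * v.2.2, v.2.2)
  invFun v := (v.1 + v.2.2 • w, v.2.1 - F v.1 w - (F w w - c) * v.2.2, v.2.2)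
  map_add' v v' := by
    ext1
    · simp only [Prod.fst_add, Prod.snd_add]; module
    · simp; ring
  map_smul' a v := by
    ext1
    · simp only [Prod.smul_fst, Prod.smul_snd, RingHom.id_apply, smul_eq_mul]; module
    · simp; ring
  left_inv v := by
    ext1
    · simp
    · ext1
      · simp only [map_sub, LinearMap.sub_apply, map_smul, LinearMap.smul_apply, smul_eq_mul]; ring
      · rfl
  right_inv v := by
    ext1
    · simp
    · ext1
      · simp only [map_add, LinearMap.add_apply, map_smul, LinearMap.smul_apply, smul_eq_mul]; ring
      · rfl

lemma eichler_apply (w : V) (c : O) (v : V × O × O) :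
    F.eichler w c v = (v.1 - v.2.2 • w, v.2.1 + F v.1 w - c * v.2.2, v.2.2) := rfl

variable {F}

lemma eichler_mem_unitaryGroup {w : V} {c : O} (h : c - conj c = F w w) :
    F.eichler w c ∈ (F.prod hyperbolicPlane).unitaryGroup := by
  intro x y
  simp only [eichler_apply, prod_apply, hyperbolicPlane_apply, map_sub, map_add, map_mul,
    LinearMap.sub_apply, map_smul, map_smulₛₗ, LinearMap.smul_apply, smul_eq_mul, ← h,
    F.skew y.1 w]
  ring

lemma exists_sub_conj_eq_apply_self (w : V) : ∃ c, c - conj c = F w w := by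
  refine ⟨-(F w w).re * ω, O.ext ?_ ?_⟩
  · simp
  · have := F.two_mul_re_apply_self w
    rw [traceForm_apply] at this
    simp; linarith

lemma orbit_eq_sub_smul {w : V} {c : O} (h : c - conj c = F w w) (x : V) (a d : O) :
    orbit (F.prod hyperbolicPlane).unitaryGroup (x, a, d) =
      orbit (F.prod hyperbolicPlane).unitaryGroup (x - d • w, a + F x w - c * d, d) :=
  orbit_eq_of_apply_eq (eichler_mem_unitaryGroup h) rfl

lemma orbit_eq_swap (x : V) (a d : O) :
    orbit (F.prod hyperbolicPlane).unitaryGroup (x, a, d) =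
      orbit (F.prod hyperbolicPlane).unitaryGroup (x, -d, a) :=
  orbit_eq_of_apply_eq
    (prodCongr_mem_unitaryGroup F.unitaryGroup.one_mem hyperbolicSwap_mem_unitaryGroup) rfl

lemma traceForm_prod_hyperbolicPlane_self (x : V) (a d : O) :
    (F.prod hyperbolicPlane).traceForm (x, a, d) (x, a, d) =
      F.traceForm x x - 2 * (a * conj d).im := by
  rw [traceForm_prod, traceForm_hyperbolicPlane_self]; ring

lemma orbit_pair_eq_of_apply_eq_one {x w : V} (h : F x w = 1) (a a' : O) :
    orbit (F.prod hyperbolicPlane).unitaryGroup ((x, a, (0 : O)), isotropicVector V) =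
      orbit (F.prod hyperbolicPlane).unitaryGroup ((x, a', (0 : O)), isotropicVector V) := by
  obtain ⟨c, hc⟩ := exists_sub_conj_eq_apply_self (F := F) (conj (a' - a) • w)
  refine orbit_pair_eq_of_apply_eq (eichler_mem_unitaryGroup hc) ?_ ?_
  · simp [eichler_apply, h]
  · simp [eichler_apply, isotropicVector]

lemma exists_orbit_eq_sub_smul (x : V) (a d : O) (w : V) :
    ∃ a', orbit (F.prod hyperbolicPlane).unitaryGroup (x, a, d) =
      orbit (F.prod hyperbolicPlane).unitaryGroup (x - d • w, a', d) := by
  obtain ⟨c, hc⟩ := exists_sub_conj_eq_apply_self (F := F) w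
  exact ⟨_, orbit_eq_sub_smul hc x a d⟩

lemma orbit_eq_sub_intCast_mul (x : V) (a d : O) (k : ℤ) :
    orbit (F.prod hyperbolicPlane).unitaryGroup (x, a, d) =
      orbit (F.prod hyperbolicPlane).unitaryGroup (x, a - k * d, d) := by
  simpa using orbit_eq_sub_smul (F := F) (w := 0) (c := k) (by simp) x a d

lemma orbit_eq_of_isUnit {d : O} (hd : IsUnit d) (x : V) (a : O) {m : ℤ}
    (h : (F.prod hyperbolicPlane).traceForm (x, a, d) (x, a, d) = -2 * m) :
    orbit (F.prod hyperbolicPlane).unitaryGroup (x, a, d) =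
      orbit (F.prod hyperbolicPlane).unitaryGroup (0, m * ω, 1) := by
  have hdd : d * conj d = 1 := by rw [mul_conj, isUnit_iff_normSq_eq_one.mp hd, Int.cast_one]
  obtain ⟨a', ha'⟩ := exists_orbit_eq_sub_smul (F := F) x a d (conj d • x)
  rw [smul_smul, hdd, one_smul, sub_self, ← orbit_smul_of_isUnit (hd.map conj) (0, a', d)] at ha'
  have hnorm := traceForm_self_eq_of_orbit_eq ha'
  simp only [Prod.smul_mk, smul_eq_mul, smul_zero, mul_comm (conj d) d, hdd] at ha' hnorm
  have him : (conj d * a').im = m := by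
    rw [h, traceForm_prod_hyperbolicPlane_self] at hnorm
    simpa using hnorm.symm
  rw [ha', orbit_eq_sub_intCast_mul _ _ _ (conj d * a').re]
  congr
  nth_rw 1 [eq_re_add_im_mul_ω (conj d * a'), him]
  ring

end Eichler

/-- A vector that is not a multiple of any non-unit scalar. -/
def IsPrimitive {V : Type*} [AddCommGroup V] [Module O V] (x : V) : Prop :=
  ∀ a : O, (∃ y : V, x = a • y) → IsUnit a

lemma IsPrimitive.map {V W : Type*} [AddCommGroup V] [Module O V] [AddCommGroup W] [Module O W]
    {x : V} (hx : IsPrimitive x) (g : V ≃ₗ[O] W) : IsPrimitive (g x) := by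
  rintro a ⟨y, hy⟩
  exact hx a ⟨g.symm y, by rw [← map_smul, ← hy, g.symm_apply_apply]⟩

end SkewHermitianForm

namespace e8

lemma exists_apply_eq_one {x : Fin 4 → O} (hx : e8.traceForm x x = 2 ∨ e8.traceForm x x = 4) :
    ∃ w, e8 x w = 1 := by
  rcases hx with hx | hx
  · obtain ⟨g, hg, hgx⟩ := exists_apply_eq_of_orbit_eq (orbit_eq_of_isRoot hx)
    refine ⟨g.symm (basisRoot 1), ?_⟩
    rw [← hg, hgx, g.apply_symm_apply]
    exact apply_basisRoot_castSucc_succ 0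
  · obtain ⟨g, hg, hgx⟩ := exists_apply_eq_of_orbit_eq (orbit_eq_of_traceForm_self_eq_four hx)
    refine ⟨g.symm (basisRoot 2), ?_⟩
    rw [← hg, hgx, g.apply_symm_apply, map_add, LinearMap.add_apply]
    simp [apply, basisRoot]

lemma exists_prod_apply_eq_one {x : (Fin 4 → O) × (Fin 4 → O)}
    (hx : (e8.prod e8).traceForm x x = 4) : ∃ w, e8.prod e8 x w = 1 := by
  rw [traceForm_prod] at hx
  obtain ⟨m, hm⟩ := e8.even_traceForm_self x.1
  have h1 := posDef.traceForm_self_nonneg x.1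
  have h2 := posDef.traceForm_self_nonneg x.2
  obtain h | h : (e8.traceForm x.1 x.1 = 2 ∨ e8.traceForm x.1 x.1 = 4) ∨
      e8.traceForm x.2 x.2 = 4 := by omega
  · obtain ⟨w, hw⟩ := exists_apply_eq_one h
    exact ⟨(w, 0), by simp [prod_apply, hw]⟩
  · obtain ⟨w, hw⟩ := exists_apply_eq_one (.inr h)
    exact ⟨(0, w), by simp [prod_apply, hw]⟩

lemma orbit_eq_or_orbit_eq_of_traceForm_prod_eq_four {x : (Fin 4 → O) × (Fin 4 → O)}
    (hx : (e8.prod e8).traceForm x x = 4) :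
    orbit (e8.prod e8).unitaryGroup x =
        orbit (e8.prod e8).unitaryGroup (basisRoot 0 + basisRoot 1, 0) ∨
      orbit (e8.prod e8).unitaryGroup x =
        orbit (e8.prod e8).unitaryGroup (basisRoot 0, basisRoot 0) := by
  obtain ⟨x, y⟩ := x
  rw [traceForm_prod] at hx
  simp only at hx
  obtain ⟨m, hm⟩ := e8.even_traceForm_self x
  have hx0 := posDef.traceForm_self_nonneg x
  have hy0 := posDef.traceForm_self_nonneg y
  obtain ⟨h, h'⟩ | ⟨h, h'⟩ | ⟨h, h'⟩ : (e8.traceForm x x = 4 ∧ e8.traceForm y y = 0) ∨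
      (e8.traceForm x x = 0 ∧ e8.traceForm y y = 4) ∨
      e8.traceForm x x = 2 ∧ e8.traceForm y y = 2 := by omega
  · rw [posDef.traceForm_self_eq_zero.mp h']
    exact .inl (orbit_prod_eq (orbit_eq_of_traceForm_self_eq_four h) rfl)
  · rw [posDef.traceForm_self_eq_zero.mp h]
    refine .inl ((orbit_eq_of_apply_eq prodComm_mem_unitaryGroup rfl).trans
      (orbit_prod_eq (orbit_eq_of_traceForm_self_eq_four h') rfl))
  · exact .inr (orbit_prod_eq (orbit_eq_of_isRoot h) (orbit_eq_of_isRoot h'))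

end e8

/-- The form of the lattice `Λ′ ⊥ Λ″ ⊥ H_𝒪`. -/
abbrev lorentzian : SkewHermitianForm (((Fin 4 → O) × (Fin 4 → O)) × O × O) :=
  (e8.prod e8).prod hyperbolicPlane

namespace lorentzian

open e8

lemma traceForm_self (x : (Fin 4 → O) × (Fin 4 → O)) (a d : O) :
    lorentzian.traceForm (x, a, d) (x, a, d) =
      e8.traceForm x.1 x.1 + e8.traceForm x.2 x.2 - 2 * (a * conj d).im := by
  rw [lorentzian, traceForm_prod_hyperbolicPlane_self, traceForm_prod]

/-- A vector `(x, a, d)` is reduced if both components of `x` lie in the covering balls scaled by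
`d` and `a * conj d` is centered modulo integer multiples of `normSq d`. -/
structure IsReduced (x : (Fin 4 → O) × (Fin 4 → O)) (a d : O) : Prop where
  fst : InCoveringBall d x.1
  snd : InCoveringBall d x.2
  centered : |2 * (a * conj d).re + (a * conj d).im| ≤ normSq d

lemma exists_isReduced (x : (Fin 4 → O) × (Fin 4 → O)) (a : O) {d : O} (hd : d ≠ 0) :
    ∃ y c, IsReduced y c d ∧
      orbit lorentzian.unitaryGroup (x, a, d) = orbit lorentzian.unitaryGroup (y, c, d) := by
  obtain ⟨l, hl⟩ := exists_inCoveringBall hd x.1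
  obtain ⟨l', hl'⟩ := exists_inCoveringBall hd x.2
  obtain ⟨a', ha'⟩ := exists_orbit_eq_sub_smul (F := e8.prod e8) x a d (l, l')
  obtain ⟨t, ht⟩ : ∃ t, t = 2 * (a' * conj d).re + (a' * conj d).im := ⟨_, rfl⟩
  have hpos := normSq_pos.mpr hd
  obtain ⟨k, hk⟩ : ∃ k : ℤ, |t - k * (2 * normSq d)| ≤ normSq d := by
    refine ⟨(t + normSq d) / (2 * normSq d), abs_le.mpr ?_⟩
    have h0 := Int.emod_nonneg (t + normSq d) (b := 2 * normSq d) (by omega)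
    have h1 := Int.emod_lt_of_pos (t + normSq d) (b := 2 * normSq d) (by omega)
    have h2 := Int.mul_ediv_add_emod (t + normSq d) (2 * normSq d)
    constructor <;> linarith
  refine ⟨x - d • (l, l'), a' - k * d, ⟨hl, hl', ?_⟩, ha'.trans (orbit_eq_sub_intCast_mul _ a' d k)⟩
  have : (a' - k * d) * conj d = a' * conj d - k * (normSq d : ℤ) := by
    rw [← mul_conj]; ring
  rw [this]
  convert hk using 2
  simp [ht]
  ring

lemma IsReduced.normSq_lt {x : (Fin 4 → O) × (Fin 4 → O)} {a d : O} (h : IsReduced x a d)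
    (hd : d ≠ 0) (him : |(a * conj d).im| < normSq d) : normSq a < normSq d := by
  have hpos := normSq_pos.mpr hd
  have key := four_mul_normSq (a * conj d)
  have h1 := sq_le_sq' (abs_le.mp h.centered).1 (abs_le.mp h.centered).2
  have h2 := sq_lt_sq' (abs_lt.mp him).1 (abs_lt.mp him).2
  rw [map_mul, normSq_conj] at key
  nlinarith

lemma orbit_eq_of_snd_eq_zero {x : (Fin 4 → O) × (Fin 4 → O)} {a : O}
    (h : lorentzian.traceForm (x, a, 0) (x, a, 0) = 4) :
    orbit lorentzian.unitaryGroup (x, a, (0 : O)) =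
      orbit lorentzian.unitaryGroup (0, (-2 : ℤ) * ω, (1 : O)) := by
  have hx : (e8.prod e8).traceForm x x = 4 := by
    simpa [traceForm_prod_hyperbolicPlane_self] using h
  obtain ⟨w, hw⟩ := exists_prod_apply_eq_one hx
  obtain ⟨g, hg, hgx, -⟩ :=
    exists_apply_eq_of_orbit_pair_eq (orbit_pair_eq_of_apply_eq_one hw a 1)
  rw [orbit_eq_of_apply_eq hg hgx, orbit_eq_swap]
  refine orbit_eq_of_isUnit isUnit_one _ _ ?_
  simpa [traceForm_prod_hyperbolicPlane_self] using hx

theorem orbit_eq_of_traceForm_eq_four {x : (Fin 4 → O) × (Fin 4 → O)} {a d : O}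
    (h : lorentzian.traceForm (x, a, d) (x, a, d) = 4) :
    orbit lorentzian.unitaryGroup (x, a, d) =
      orbit lorentzian.unitaryGroup (0, (-2 : ℤ) * ω, 1) := by
  induction hN : (normSq d).toNat using Nat.strong_induction_on generalizing x a d with
  | _ N ih =>
    obtain rfl | hd := eq_or_ne d 0
    · exact orbit_eq_of_snd_eq_zero h
    by_cases hunit : IsUnit d
    · exact orbit_eq_of_isUnit hunit x a (h.trans (by norm_num))
    obtain ⟨y, c, hred, horb⟩ := exists_isReduced x a hd
    have hnorm := (traceForm_self_eq_of_orbit_eq horb).symm.trans h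
    have hpos := normSq_pos.mpr hd
    have hlt : normSq c < normSq d := by
      refine hred.normSq_lt hd (abs_lt.mpr ?_)
      have hne2 := normSq_emod_three_ne_two d
      have hne1 := mt isUnit_iff_normSq_eq_one.mpr hunit
      have h1 := hred.fst.1
      have h2 := hred.snd.1
      have h1' := posDef.traceForm_self_nonneg y.1
      have h2' := posDef.traceForm_self_nonneg y.2
      rw [traceForm_self] at hnorm
      omega
    have horb' := horb.trans (orbit_eq_swap ..)
    exact horb'.trans (ih _ (by omega) ((traceForm_self_eq_of_orbit_eq horb').symm.trans h) rfl)

/-- The equations `e8.traceForm x.i x.i = normSq d` say that the `E₈` components of the vector are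
deep holes, the only obstruction to the descent. -/
lemma IsReduced.normSq_lt_or {x : (Fin 4 → O) × (Fin 4 → O)} {a d : O} (h : IsReduced x a d)
    (hd : d ≠ 0) (h0 : lorentzian.traceForm (x, a, d) (x, a, d) = 0) :
    normSq a < normSq d ∨
      (∃ u, (u = ω ∨ u = ω - 1) ∧ a = u * d) ∧ e8.traceForm x.1 x.1 = normSq d ∧
        e8.traceForm x.2 x.2 = normSq d := by
  have hpos := normSq_pos.mpr hd
  have h1 := h.fst.1
  have h2 := h.snd.1
  have h1' := posDef.traceForm_self_nonneg x.1
  have h2' := posDef.traceForm_self_nonneg x.2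
  rw [traceForm_self] at h0
  obtain him | him : (a * conj d).im < normSq d ∨ (a * conj d).im = normSq d := by omega
  · exact .inl (h.normSq_lt hd (abs_lt.mpr (by omega)))
  have key := four_mul_normSq (a * conj d)
  rw [map_mul, normSq_conj] at key
  obtain hlt | heq := h.centered.lt_or_eq
  · refine .inl ?_
    have := sq_lt_sq' (abs_lt.mp hlt).1 (abs_lt.mp hlt).2
    rw [him] at key this
    nlinarith
  refine .inr ⟨?_, by omega, by omega⟩
  have hmul {u : O} (hu : a * conj d = u * normSq d) : a = u * d := by
    refine mul_right_cancel₀ (fun h ↦ hd (by simpa using congrArg conj h) : conj d ≠ 0) ?_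
    rw [hu, mul_assoc, mul_conj]
  obtain hre | hre : (a * conj d).re = 0 ∨ (a * conj d).re = -normSq d := by
    rcases abs_eq hpos.le |>.mp heq with h | h <;> omega
  · exact ⟨ω, .inl rfl, hmul (O.ext (by simp [hre]) (by simp [him]))⟩
  · exact ⟨ω - 1, .inr rfl, hmul (O.ext (by simp [hre]) (by simp [him]))⟩

/-- Deep holes are halves of vectors of norm 4, so `d = 2 f`; then `f` divides the whole vector and
is a unit by primitivity. -/
lemma exists_orbit_eq_two {x : (Fin 4 → O) × (Fin 4 → O)} {u d : O} (h : IsReduced x (u * d) d)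
    (hd : d ≠ 0) (hx₁ : e8.traceForm x.1 x.1 = normSq d) (hx₂ : e8.traceForm x.2 x.2 = normSq d)
    (hprim : IsPrimitive (x, u * d, d)) :
    normSq d = 4 ∧ orbit lorentzian.unitaryGroup (x, u * d, d) =
      orbit lorentzian.unitaryGroup
        ((basisRoot 0 + basisRoot 1, basisRoot 0 + basisRoot 1), 2 * u, (2 : O)) := by
  obtain ⟨z₁, hz₁, hxz₁⟩ := h.fst.2 hx₁
  obtain ⟨z₂, hz₂, hxz₂⟩ := h.snd.2 hx₂
  obtain ⟨w, hw⟩ := exists_apply_eq_one (.inr hz₁)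
  obtain ⟨f, rfl⟩ : 2 ∣ d := ⟨e8 x.1 w, by
    have := congrArg (e8 · w) hxz₁
    simpa [hw] using this.symm⟩
  have hhalf {y z : Fin 4 → O} (h : (2 : O) • y = (2 * f) • z) : y = f • z :=
    smul_right_injective _ two_ne_zero (h.trans (mul_smul ..))
  have hv : (x, u * (2 * f), 2 * f) = f • ((z₁, z₂), 2 * u, (2 : O)) := by
    ext1
    · exact Prod.ext (hhalf hxz₁) (hhalf hxz₂)
    · ext1 <;> simp <;> ring
  have hf : IsUnit f := hprim f ⟨_, hv⟩
  refine ⟨by rw [map_mul, isUnit_iff_normSq_eq_one.mp hf]; simp [normSq_def], ?_⟩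
  rw [hv, orbit_smul_of_isUnit hf]
  exact orbit_prod_eq (orbit_prod_eq (orbit_eq_of_traceForm_self_eq_four hz₁)
    (orbit_eq_of_traceForm_self_eq_four hz₂)) rfl

/-- Here `normSq (2 - ω) = 3 < 4 = normSq 2`, so that the descent can go on. -/
lemma exists_orbit_two_eq {u : O} (hu : u = ω ∨ u = ω - 1) :
    ∃ x a, orbit lorentzian.unitaryGroup
        ((basisRoot 0 + basisRoot 1, basisRoot 0 + basisRoot 1), 2 * u, (2 : O)) =
      orbit lorentzian.unitaryGroup (x, a, 2 - ω) := by
  obtain ⟨v, hv⟩ : ∃ v : (Fin 4 → O) × (Fin 4 → O),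
    v = (basisRoot 0 + basisRoot 1, basisRoot 0 + basisRoot 1) := ⟨_, rfl⟩
  obtain ⟨r, hr⟩ : ∃ r : (Fin 4 → O) × (Fin 4 → O), r = (![0, ω, 1, -ω], 0) := ⟨_, rfl⟩
  have hroot : lorentzian.IsRoot (r, conj u - conj ω, 1) := by
    rw [hr, SkewHermitianForm.IsRoot, traceForm_self]
    rcases hu with rfl | rfl <;> simp [traceForm_apply, apply]
  have hone : lorentzian (v, 2 * u, 2) (r, conj u - conj ω, 1) = 1 := by
    simp only [hv, hr, prod_apply, hyperbolicPlane_apply, apply, basisRoot]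
    ext <;> simp
    ring
  have horb := orbit_eq_of_apply_eq (triflection_mem_unitaryGroup hroot)
    (triflection_apply hroot (v, 2 * u, 2))
  rw [hone, mul_one] at horb
  rw [← hv]
  refine ⟨v - ω • r, 2 * u - ω * (conj u - conj ω), horb.trans ?_⟩
  simp

theorem orbit_eq_isotropicVector {x : (Fin 4 → O) × (Fin 4 → O)} {a d : O}
    (h : lorentzian.traceForm (x, a, d) (x, a, d) = 0) (hprim : IsPrimitive (x, a, d)) :
    orbit lorentzian.unitaryGroup (x, a, d) =
      orbit lorentzian.unitaryGroup (isotropicVector ((Fin 4 → O) × (Fin 4 → O))) := by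
  induction hN : (normSq d).toNat using Nat.strong_induction_on generalizing x a d with
  | _ N ih =>
    obtain rfl | hd := eq_or_ne d 0
    · have hx : x = 0 := by
        rw [traceForm_self] at h
        simp only [map_zero, mul_zero, im_zero, sub_zero] at h
        have h₁ := posDef.traceForm_self_nonneg x.1
        have h₂ := posDef.traceForm_self_nonneg x.2
        exact Prod.ext (posDef.traceForm_self_eq_zero.mp (by omega))
          (posDef.traceForm_self_eq_zero.mp (by omega))
      have hv : (x, a, 0) = a • isotropicVector ((Fin 4 → O) × (Fin 4 → O)) := by
        simp [hx, isotropicVector]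
      rw [hv, orbit_smul_of_isUnit (hprim a ⟨_, hv⟩)]
    have step {x' a' d'} (horb : orbit lorentzian.unitaryGroup (x, a, d) =
        orbit lorentzian.unitaryGroup (x', a', d')) (hlt : normSq d' < normSq d) :
        orbit lorentzian.unitaryGroup (x, a, d) =
          orbit lorentzian.unitaryGroup (isotropicVector ((Fin 4 → O) × (Fin 4 → O))) := by
      have := normSq_pos.mpr hd
      obtain ⟨g, hg, hgx⟩ := exists_apply_eq_of_orbit_eq horb
      exact horb.trans (ih _ (by omega) (by rw [← hgx, traceForm_map hg, h])
        (hgx ▸ hprim.map g) rfl)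
    obtain ⟨y, c, hred, horb⟩ := exists_isReduced x a hd
    have hnorm := (traceForm_self_eq_of_orbit_eq horb).symm.trans h
    obtain hlt | ⟨⟨u, hu, rfl⟩, h₁, h₂⟩ := hred.normSq_lt_or hd hnorm
    · exact step (horb.trans (orbit_eq_swap ..)) hlt
    obtain ⟨g, -, hgx⟩ := exists_apply_eq_of_orbit_eq horb
    obtain ⟨h4, horb'⟩ := exists_orbit_eq_two hred hd h₁ h₂ (hgx ▸ hprim.map g)
    obtain ⟨x', a', hx'⟩ := exists_orbit_two_eq hu
    exact step (horb.trans (horb'.trans hx')) (by rw [h4]; simp [normSq_def])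

end lorentzian

namespace SkewHermitianForm

variable {V W : Type*} [AddCommGroup V] [Module O V] [AddCommGroup W] [Module O W]
  {F : SkewHermitianForm V} {G : SkewHermitianForm W}

lemma IsRoot.fst_eq_zero_or_snd_eq_zero (hF : F.PosDef) (hG : G.PosDef) {r : V × W}
    (hr : (F.prod G).IsRoot r) : r.1 = 0 ∨ r.2 = 0 := by
  rw [IsRoot, traceForm_prod] at hr
  obtain ⟨m, hm⟩ := F.even_traceForm_self r.1
  have h₁ := hF.traceForm_self_nonneg r.1
  have h₂ := hG.traceForm_self_nonneg r.2
  rw [← hF.traceForm_self_eq_zero, ← hG.traceForm_self_eq_zero]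
  omega

lemma IsRoot.add_fst_eq_zero_or_add_snd_eq_zero (hF : F.PosDef) (hG : G.PosDef) {r s : V × W}
    (hr : (F.prod G).IsRoot r) (hs : (F.prod G).IsRoot s) (h : F.prod G r s ≠ 0) :
    (r + s).1 = 0 ∨ (r + s).2 = 0 := by
  rw [prod_apply] at h
  rcases hr.fst_eq_zero_or_snd_eq_zero hF hG with hr | hr <;>
    rcases hs.fst_eq_zero_or_snd_eq_zero hF hG with hs | hs <;> simp [hr, hs] at h ⊢

lemma apply_isotropicVector (x : V × O × O) :
    F.prod hyperbolicPlane x (isotropicVector V) = -x.2.2 := by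
  simp [prod_apply, hyperbolicPlane_apply, isotropicVector]

/-- An isometry fixing `isotropicVector V` induces an isometry of `e^⊥ / e ≅ V`. -/
lemma apply_fst_of_map_isotropicVector {g : (V × O × O) ≃ₗ[O] V × O × O}
    (hg : g ∈ (F.prod hyperbolicPlane).unitaryGroup)
    (he : g (isotropicVector V) = isotropicVector V) (x y : V) :
    F (g (x, 0)).1 (g (y, 0)).1 = F x y := by
  have hsnd (v : V) : (g (v, 0)).2.2 = 0 := by
    have := hg (v, 0) (isotropicVector V)
    rwa [he, apply_isotropicVector, apply_isotropicVector, neg_inj] at this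
  simpa [prod_apply, hyperbolicPlane_apply, hsnd] using hg (x, 0) (y, 0)

lemma orbit_pair_isotropicVector_eq {x y : V}
    (h : orbit F.unitaryGroup x = orbit F.unitaryGroup y) (c : O × O) :
    orbit (F.prod hyperbolicPlane).unitaryGroup ((x, c), isotropicVector V) =
      orbit (F.prod hyperbolicPlane).unitaryGroup ((y, c), isotropicVector V) := by
  obtain ⟨g, hg, rfl⟩ := exists_apply_eq_of_orbit_eq h
  exact orbit_pair_eq_of_apply_eq
    (prodCongr_mem_unitaryGroup hg hyperbolicPlane.unitaryGroup.one_mem) rfl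
    (by simp [isotropicVector])

lemma isPrimitive_isotropicVector : IsPrimitive (isotropicVector V) := by
  rintro a ⟨y, hy⟩
  exact .of_mul_eq_one y.2.1 (congrArg (fun v : V × O × O ↦ v.2.1) hy).symm

lemma traceForm_isotropicVector :
    (F.prod hyperbolicPlane).traceForm (isotropicVector V) (isotropicVector V) = 0 := by
  simp [isotropicVector, traceForm_prod_hyperbolicPlane_self]

end SkewHermitianForm

namespace lorentzian

open e8

/-- The vector `r₁′ + r₂′`, whose pair with `e` has type `(θ)`. -/
def typeTheta : ((Fin 4 → O) × (Fin 4 → O)) × O × O := ((basisRoot 0 + basisRoot 1, 0), 0)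

/-- The vector `r₁′ + r₁″`, whose pair with `e` has type `(0)`. -/
def typeZero : ((Fin 4 → O) × (Fin 4 → O)) × O × O := ((basisRoot 0, basisRoot 0), 0)

lemma traceForm_typeTheta : lorentzian.traceForm typeTheta typeTheta = 4 := by
  simp [traceForm_apply, prod_apply, typeTheta, apply, basisRoot]

theorem orbit_eq_orbit_of_traceForm_eq_four {z z' : ((Fin 4 → O) × (Fin 4 → O)) × O × O}
    (hz : lorentzian.traceForm z z = 4) (hz' : lorentzian.traceForm z' z' = 4) :
    orbit lorentzian.unitaryGroup z = orbit lorentzian.unitaryGroup z' :=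
  (orbit_eq_of_traceForm_eq_four hz).trans (orbit_eq_of_traceForm_eq_four hz').symm

theorem exists_isPrimitive_apply_eq_zero {z : ((Fin 4 → O) × (Fin 4 → O)) × O × O}
    (hz : lorentzian.traceForm z z = 4) :
    ∃ n : ((Fin 4 → O) × (Fin 4 → O)) × O × O,
      IsPrimitive n ∧ lorentzian.traceForm n n = 0 ∧ lorentzian z n = 0 := by
  obtain ⟨g, hg, rfl⟩ :=
    exists_apply_eq_of_orbit_eq (orbit_eq_orbit_of_traceForm_eq_four traceForm_typeTheta hz)
  refine ⟨g (isotropicVector _), isPrimitive_isotropicVector.map g, ?_, ?_⟩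
  · rw [traceForm_map hg, traceForm_isotropicVector]
  · rw [hg, apply_isotropicVector]
    simp [typeTheta]

theorem orbit_pair_eq_or_orbit_pair_eq {z n : ((Fin 4 → O) × (Fin 4 → O)) × O × O}
    (hz : lorentzian.traceForm z z = 4) (hn : IsPrimitive n)
    (h0 : lorentzian.traceForm n n = 0) (hzn : lorentzian z n = 0) :
    orbit lorentzian.unitaryGroup (z, n) =
        orbit lorentzian.unitaryGroup (typeTheta, isotropicVector _) ∨
      orbit lorentzian.unitaryGroup (z, n) =
        orbit lorentzian.unitaryGroup (typeZero, isotropicVector _) := by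
  obtain ⟨g, hg, hgn⟩ := exists_apply_eq_of_orbit_eq (orbit_eq_isotropicVector h0 hn)
  rw [orbit_pair_eq_of_apply_eq hg rfl hgn]
  rw [← hg, hgn, apply_isotropicVector, neg_eq_zero] at hzn
  rw [← traceForm_map hg] at hz
  obtain ⟨⟨x, a, d⟩, hgz⟩ : ∃ v, v = g z := ⟨_, rfl⟩
  rw [← hgz] at hz hzn ⊢
  obtain rfl : d = 0 := hzn
  have hx : (e8.prod e8).traceForm x x = 4 := by
    simpa [traceForm_prod_hyperbolicPlane_self] using hz
  obtain ⟨w, hw⟩ := exists_prod_apply_eq_one hx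
  rw [orbit_pair_eq_of_apply_eq_one hw a 0]
  exact (orbit_eq_or_orbit_eq_of_traceForm_prod_eq_four hx).imp
    (orbit_pair_isotropicVector_eq · 0) (orbit_pair_isotropicVector_eq · 0)

/-- The roots `r₁′` and `r₂′` are not orthogonal, hence an isometry of `e^⊥ / e` maps both into the
same `E₈` summand, unlike `r₁′ + r₁″`. -/
theorem orbit_typeTheta_ne_orbit_typeZero :
    orbit lorentzian.unitaryGroup
        (typeTheta, isotropicVector ((Fin 4 → O) × (Fin 4 → O))) ≠
      orbit lorentzian.unitaryGroup (typeZero, isotropicVector _) := by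
  intro h
  obtain ⟨g, hg, hz, he⟩ := exists_apply_eq_of_orbit_pair_eq h
  have happly := apply_fst_of_map_isotropicVector hg he
  have hroot (i : Fin 4) : (e8.prod e8).IsRoot (g ((basisRoot i, 0), 0)).1 := by
    rw [isRoot_iff, happly, ← isRoot_iff, SkewHermitianForm.IsRoot, traceForm_prod]
    simpa [SkewHermitianForm.IsRoot] using isRoot_basisRoot i
  have hne : e8.prod e8 (g ((basisRoot 0, 0), 0)).1 (g ((basisRoot 1, 0), 0)).1 ≠ 0 := by
    rw [happly, prod_apply]
    simp [apply, basisRoot]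
  have hsum : (g ((basisRoot 0, 0), 0)).1 + (g ((basisRoot 1, 0), 0)).1 =
      (basisRoot 0, basisRoot 0) := by
    rw [← Prod.fst_add, ← map_add]
    simpa [typeTheta, typeZero] using congrArg Prod.fst hz
  have := (hroot 0).add_fst_eq_zero_or_add_snd_eq_zero posDef posDef (hroot 1) hne
  rw [hsum] at this
  simp [basisRoot] at this

end lorentzian

/-- The coordinates identifying `Fin 10 → O` with the underlying module of `lorentzian`. -/
def coordinates : (Fin 10 → O) ≃ₗ[O] ((Fin 4 → O) × (Fin 4 → O)) × O × O where
  toFun x := ((![x 0, x 1, x 2, x 3], ![x 4, x 5, x 6, x 7]), x 8, x 9)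
  invFun v := ![v.1.1 0, v.1.1 1, v.1.1 2, v.1.1 3, v.1.2 0, v.1.2 1, v.1.2 2, v.1.2 3,
    v.2.1, v.2.2]
  map_add' x y := by ext i <;> (try fin_cases i) <;> rfl
  map_smul' c x := by ext i <;> (try fin_cases i) <;> rfl
  left_inv x := by funext i; fin_cases i <;> rfl
  right_inv v := by ext i <;> (try fin_cases i) <;> rfl

namespace coordinates

lemma psi10_eq (x y : Fin 10 → O) :
    psi10 x y = θ * lorentzian (coordinates x) (coordinates y) := by
  simp [psi10, gram10, Fin.sum_univ_succ, coordinates, prod_apply, hyperbolicPlane_apply, e8.apply,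
    conj_θ]
  linear_combination (x 0 * conj (y 0) + x 1 * conj (y 1) + x 2 * conj (y 2) + x 3 * conj (y 3) +
    x 4 * conj (y 4) + x 5 * conj (y 5) + x 6 * conj (y 6) + x 7 * conj (y 7)) * θ_mul_θ

lemma psi10_eq_zero_iff {x y : Fin 10 → O} :
    psi10 x y = 0 ↔ lorentzian (coordinates x) (coordinates y) = 0 := by
  simp [psi10_eq, θ_ne_zero]

lemma psi10_self_eq_iff {x : Fin 10 → O} {m : ℤ} :
    psi10 x x = 3 * m ↔ lorentzian.traceForm (coordinates x) (coordinates x) = 2 * m := by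
  rw [psi10_eq, ← mul_right_inj' (two_ne_zero (α := O)), two_mul_θ_mul_apply_self]
  norm_cast
  omega

lemma psi10_self_eq_zero_iff {x : Fin 10 → O} :
    psi10 x x = 0 ↔ lorentzian.traceForm (coordinates x) (coordinates x) = 0 := by
  simpa using psi10_self_eq_iff (x := x) (m := 0)

lemma psi10_self_eq_six_iff {x : Fin 10 → O} :
    psi10 x x = 6 ↔ lorentzian.traceForm (coordinates x) (coordinates x) = 4 := by
  rw [show (6 : O) = 3 * (2 : ℤ) by norm_num, psi10_self_eq_iff]
  norm_num

lemma isUnitary10_iff {g : (((Fin 4 → O) × (Fin 4 → O)) × O × O) ≃ₗ[O]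
      ((Fin 4 → O) × (Fin 4 → O)) × O × O} :
    IsUnitary10 (coordinates.trans (g.trans coordinates.symm)) ↔ g ∈ lorentzian.unitaryGroup := by
  simp only [IsUnitary10, psi10_eq, mul_right_inj' θ_ne_zero, coordinates.symm.surjective.forall]
  simp [unitaryGroup, ← SetLike.mem_coe]

lemma isPrimVec_iff {x : Fin 10 → O} : IsPrimVec x ↔ IsPrimitive (coordinates x) :=
  ⟨fun h ↦ IsPrimitive.map h coordinates, fun h ↦ coordinates.symm_apply_apply x ▸ h.map _⟩

lemma exists_isUnitary10_iff {z n z' n' : Fin 10 → O} :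
    (∃ g : (Fin 10 → O) ≃ₗ[O] Fin 10 → O, IsUnitary10 g ∧ g z = z' ∧ g n = n') ↔
      orbit lorentzian.unitaryGroup (coordinates z, coordinates n) =
        orbit lorentzian.unitaryGroup (coordinates z', coordinates n') := by
  constructor
  · rintro ⟨g, hg, rfl, rfl⟩
    refine orbit_pair_eq_of_apply_eq (g := coordinates.symm.trans (g.trans coordinates))
      (isUnitary10_iff.mp fun x y ↦ ?_) (by simp) (by simp)
    simpa using hg x y
  · intro h
    obtain ⟨g, hg, hz, hn⟩ := exists_apply_eq_of_orbit_pair_eq h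
    exact ⟨_, isUnitary10_iff.mpr hg, by simp [hz], by simp [hn]⟩

lemma map_b_zero_add_b_one : coordinates (b 0 + b 1) = lorentzian.typeTheta := by
  ext i <;> (try fin_cases i) <;> simp [coordinates, b, lorentzian.typeTheta, e8.basisRoot]

lemma map_b_zero_add_b_four : coordinates (b 0 + b 4) = lorentzian.typeZero := by
  ext i <;> (try fin_cases i) <;> simp [coordinates, b, lorentzian.typeZero, e8.basisRoot]

lemma map_b_eight : coordinates (b 8) = isotropicVector _ := by
  ext i <;> (try fin_cases i) <;> simp [coordinates, b, isotropicVector]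

end coordinates

/-- Every 6-vector of `Λ` is perpendicular to some primitive isotropic
vector, and `U(Λ)` acts transitively on the 6-vectors.  On the pairs `(z, n)` of a
6-vector `z` and a primitive isotropic vector `n` with `ψ(z,n) = 0` there are exactly
two `U(Λ)`-orbits: every such pair is equivalent to exactly one of `(r₁′ + r₂′, e)`
(type `(θ)`) and `(r₁′ + r₁″, e)` (type `(0)`). -/
theorem statement8 :
    (∀ z : Fin 10 → O, psi10 z z = 6 →
      ∃ n : Fin 10 → O, IsPrimVec n ∧ psi10 n n = 0 ∧ psi10 z n = 0) ∧
    (∀ z z' : Fin 10 → O, psi10 z z = 6 → psi10 z' z' = 6 →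
      ∃ g : (Fin 10 → O) ≃ₗ[O] (Fin 10 → O), IsUnitary10 g ∧ g z = z') ∧
    (∀ z n : Fin 10 → O,
      psi10 z z = 6 → IsPrimVec n → psi10 n n = 0 → psi10 z n = 0 →
      Xor'
        (∃ g : (Fin 10 → O) ≃ₗ[O] (Fin 10 → O),
          IsUnitary10 g ∧ g z = b 0 + b 1 ∧ g n = b 8)
        (∃ g : (Fin 10 → O) ≃ₗ[O] (Fin 10 → O),
          IsUnitary10 g ∧ g z = b 0 + b 4 ∧ g n = b 8)) := by
  simp only [coordinates.psi10_self_eq_six_iff, coordinates.psi10_self_eq_zero_iff,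
    coordinates.psi10_eq_zero_iff, coordinates.isPrimVec_iff, coordinates.exists_isUnitary10_iff,
    coordinates.map_b_zero_add_b_one, coordinates.map_b_zero_add_b_four, coordinates.map_b_eight]
  refine ⟨fun z hz ↦ ?_, fun z z' hz hz' ↦ ?_, fun z n hz hn h0 hzn ↦ ?_⟩
  · obtain ⟨n, hn⟩ := lorentzian.exists_isPrimitive_apply_eq_zero hz
    exact ⟨coordinates.symm n, by simpa using hn⟩
  · obtain ⟨g, hg, hgz⟩ :=
      exists_apply_eq_of_orbit_eq (lorentzian.orbit_eq_orbit_of_traceForm_eq_four hz hz')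
    exact ⟨_, coordinates.isUnitary10_iff.mpr hg, by simp [hgz]⟩
  · exact (xor_iff_or_and_not_and _ _).mpr
      ⟨lorentzian.orbit_pair_eq_or_orbit_pair_eq hz hn h0 hzn,
        fun ⟨h, h'⟩ ↦ lorentzian.orbit_typeTheta_ne_orbit_typeZero (h.symm.trans h')⟩

end
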